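/- arXiv:1411.6963 — 3 statements merged into one kernel-verified Lean document; each statement's English description precedes it below -/
import Mathlib

section
/- A nonnegative integer n can be written as 2·x² + (y² + y·z + z²) with x, y, z ∈ ℤ if and only if n is not of the form 4^k·(16·l + 10) for nonnegative integers k and l. -/
/-!
The map `(t, u, v) ↦ (2t + 2u + v, 2t - u + v, 2t - u - 2v)` satisfies
`6 (2t² + u² + uv + v²) = a² + b² + c²`, and every triple with `6 ∣ a² + b² + c²` lies in its image
after changing signs. Hence `n` is represented by `2x² + y² + yz + z²` exactly when `6n` is a sum of
three squares, and `n = 4^k (16l + 10)` says that `6n = 4^(k+1) (8(3l + 1) + 7)`, which are the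
multiples of `6` among the exceptions `4^k (8l + 7)` of the Legendre–Gauss three-square theorem.

For the three-square theorem, suppose that `-d` is a square modulo `dn - 1`, with `d` and `dn - 1`
positive. Then `n` is a diagonal entry of a positive definite integral `3 × 3` matrix of determinant
`1`. By Hermite's bound on the minimum of a definite form, such a matrix is equivalent over `ℤ` to
the identity, so `n` is a sum of three squares. If `4 ∤ n` and `n % 8 ≠ 7`, Dirichlet's
theorem on primes in arithmetic progressions and quadratic reciprocity provide such a `d`, with
`dn - 1` a prime or twice a prime.
-/

/-! ### Unimodular positive definite integral matrices -/

section PosDef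

open Matrix

section Condensation

variable {R : Type*} {n : ℕ}

section CommRing

variable [CommRing R] {M : Matrix (Fin (n + 1)) (Fin (n + 1)) R}

/-- Chio's pivotal condensation: the Schur complement of the entry `M 0 0`, multiplied by that entry
so that no division is needed. It is the matrix left after eliminating the first variable from the
quadratic form of `M`. -/
def chioCondensation (M : Matrix (Fin (n + 1)) (Fin (n + 1)) R) : Matrix (Fin n) (Fin n) R :=
  of fun i j => M 0 0 * M i.succ j.succ - M i.succ 0 * M 0 j.succ

lemma isSymm_chioCondensation (hM : M.IsSymm) : (chioCondensation M).IsSymm := by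
  ext i j
  simp only [chioCondensation, transpose_apply, of_apply, hM.apply]
  ring

lemma det_eq_mul_det_submatrix_succ (hM : ∀ i : Fin n, M i.succ 0 = 0) :
    M.det = M 0 0 * (M.submatrix Fin.succ Fin.succ).det := by
  simp [det_succ_column_zero, Fin.sum_univ_succ, hM, Fin.succAbove_zero]

theorem apply_zero_zero_mul_det_chioCondensation (M : Matrix (Fin (n + 1)) (Fin (n + 1)) R) :
    M 0 0 * (chioCondensation M).det = M 0 0 ^ n * M.det := by
  let scale : Fin (n + 1) → R := Fin.cons 1 fun _ => M 0 0
  let multiplier : Fin (n + 1) → R := Fin.cons 0 fun i => M i.succ 0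
  let scaled : Matrix (Fin (n + 1)) (Fin (n + 1)) R := of fun i j => scale i * M i j
  let cleared : Matrix (Fin (n + 1)) (Fin (n + 1)) R :=
    of fun i j => scaled i j - multiplier i * M 0 j
  have det_scaled : scaled.det = M 0 0 ^ n * M.det := by
    simp [scaled, scale, det_mul_column, Fin.prod_univ_succ]
  have cleared_succ_zero (i : Fin n) : cleared i.succ 0 = 0 := by
    simp [cleared, scaled, scale, multiplier, mul_comm]
  have det_cleared : cleared.det = M 0 0 * (chioCondensation M).det := by
    rw [det_eq_mul_det_submatrix_succ cleared_succ_zero]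
    congr 1
    simp [cleared, scaled, scale, multiplier]
  have det_cleared_eq_det_scaled : cleared.det = scaled.det :=
    det_eq_of_forall_row_eq_smul_add_const (-multiplier) 0 (by simp [multiplier]) fun i j => by
      simp [cleared, scaled, scale, sub_eq_add_neg]
  rw [← det_cleared, det_cleared_eq_det_scaled, det_scaled]

theorem apply_zero_zero_mul_dotProduct_mulVec_vecCons (hM : M.IsSymm) (k : R) (w : Fin n → R) :
    M 0 0 * (vecCons k w ⬝ᵥ M *ᵥ vecCons k w) =
      (M 0 0 * k + vecTail (M 0) ⬝ᵥ w) ^ 2 + w ⬝ᵥ chioCondensation M *ᵥ w := by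
  have hchio : chioCondensation M =
      M 0 0 • M.submatrix Fin.succ Fin.succ - vecMulVec (vecTail (M 0)) (vecTail (M 0)) := by
    ext i j
    simp [chioCondensation, vecMulVec_apply, vecTail, hM.apply 0]
  have hmul : M *ᵥ vecCons k w = vecCons (M 0 0 * k + vecTail (M 0) ⬝ᵥ w)
      (k • vecTail (M 0) + M.submatrix Fin.succ Fin.succ *ᵥ w) := by
    ext i
    refine Fin.cases ?_ (fun i => ?_) i <;>
      simp [mulVec, dotProduct, Fin.sum_univ_succ, vecTail, hM.apply 0, mul_comm k]
  simp only [hchio, hmul, cons_dotProduct_cons, dotProduct_add, dotProduct_sub, dotProduct_smul,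
    sub_mulVec, smul_mulVec, vecMulVec_mulVec, op_smul_eq_smul, smul_eq_mul,
    dotProduct_comm w (vecTail _)]
  ring

lemma exists_eq_transpose_mul_self_of_chioCondensation (hM : M.IsSymm) (hpivot : M 0 0 = 1)
    {V : Matrix (Fin n) (Fin n) R} (hV : chioCondensation M = Vᵀ * V) :
    ∃ W : Matrix (Fin (n + 1)) (Fin (n + 1)) R, M = Wᵀ * W := by
  refine ⟨of (vecCons (M 0) fun i => vecCons 0 (V i)), ?_⟩
  have hM_succ (i j : Fin n) :
      M i.succ j.succ = M 0 i.succ * M 0 j.succ + ∑ k, V k i * V k j := by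
    have := congrFun₂ hV i j
    simp only [chioCondensation, of_apply, hpivot, hM.apply 0, mul_apply, transpose_apply] at this
    linear_combination this
  ext i j
  refine Fin.cases ?_ (fun i => ?_) i <;> refine Fin.cases ?_ (fun j => ?_) j <;>
    simp [mul_apply, Fin.sum_univ_succ, hpivot, hM_succ, hM.apply 0]

end CommRing

variable [CommRing R] [StarRing R] [TrivialStar R]

lemma posDef_iff_isSymm_and_dotProduct_mulVec_pos [PartialOrder R] {ι : Type*} [Fintype ι]
    {M : Matrix ι ι R} : M.PosDef ↔ M.IsSymm ∧ ∀ x : ι → R, x ≠ 0 → 0 < x ⬝ᵥ M *ᵥ x := by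
  simp only [posDef_iff_dotProduct_mulVec, IsHermitian, conjTranspose_eq_transpose_of_trivial,
    IsSymm, star_trivial]

theorem posDef_iff_posDef_chioCondensation [LinearOrder R] [IsStrictOrderedRing R]
    {M : Matrix (Fin (n + 1)) (Fin (n + 1)) R} :
    M.PosDef ↔ M.IsSymm ∧ 0 < M 0 0 ∧ (chioCondensation M).PosDef := by
  simp only [posDef_iff_isSymm_and_dotProduct_mulVec_pos (R := R)]
  constructor
  · rintro ⟨hsymm, hpos⟩
    have hpivot : 0 < M 0 0 := by simpa using hpos (Pi.single 0 1) (by simp)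
    refine ⟨hsymm, hpivot, isSymm_chioCondensation hsymm, fun w hw => ?_⟩
    -- The first entry of `v` is chosen so that the square in the completed form vanishes.
    set v := vecCons (-(vecTail (M 0) ⬝ᵥ w)) (M 0 0 • w) with hv
    have hvpos : 0 < M 0 0 * (v ⬝ᵥ M *ᵥ v) :=
      mul_pos hpivot (hpos v (by simp [hv, hpivot.ne', hw]))
    have hvM : M 0 0 * (v ⬝ᵥ M *ᵥ v) = M 0 0 ^ 2 * (w ⬝ᵥ chioCondensation M *ᵥ w) := by
      rw [hv, apply_zero_zero_mul_dotProduct_mulVec_vecCons hsymm]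
      simp only [dotProduct_smul, mulVec_smul, smul_dotProduct, smul_eq_mul]
      ring
    exact pos_of_mul_pos_right (hvM ▸ hvpos) (sq_nonneg _)
  · rintro ⟨hsymm, hpivot, -, hpos⟩
    refine ⟨hsymm, fun x hx => pos_of_mul_pos_right ?_ hpivot.le⟩
    rw [← cons_head_tail x, apply_zero_zero_mul_dotProduct_mulVec_vecCons hsymm]
    rcases eq_or_ne (vecTail x) 0 with htail | htail
    · have hhead : vecHead x ≠ 0 := fun hhead =>
        hx (by rw [← cons_head_tail x, hhead, htail, cons_zero_zero])
      simpa [htail] using sq_pos_of_ne_zero (mul_ne_zero hpivot.ne' hhead)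
    · exact add_pos_of_nonneg_of_pos (sq_nonneg _) (hpos _ htail)

end Condensation

section Congruence

theorem exists_basis_smul_eq {ι R : Type*} [Finite ι] [CommRing R] [IsDomain R]
    [IsPrincipalIdealRing R] (i : ι) (x : ι → R) :
    ∃ (b : Module.Basis ι R (ι → R)) (d : R), d • b i = x := by
  classical
  have := Fintype.ofFinite ι
  rcases eq_or_ne x 0 with rfl | hx
  · exact ⟨Pi.basisFun R ι, 0, zero_smul _ _⟩
  obtain ⟨n, snf⟩ := (R ∙ x).smithNormalForm (Pi.basisFun R ι)
  obtain rfl : n = 1 := by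
    rw [← Fintype.card_fin n, ← Module.finrank_eq_card_basis snf.bN,
      ← (LinearEquiv.toSpanNonzeroSingleton R _ x hx).finrank_eq, Module.finrank_self]
  let x' : R ∙ x := ⟨x, Submodule.mem_span_singleton_self x⟩
  refine ⟨snf.bM.reindex (Equiv.swap (snf.f 0) i), snf.bN.repr x' 0 * snf.a 0, ?_⟩
  simpa [snf.snf, smul_smul] using congrArg Subtype.val (snf.bN.sum_repr x')

variable {ι R : Type*} [Fintype ι]

lemma dotProduct_transpose_mul_mul_mulVec [CommRing R] (M U : Matrix ι ι R) (x : ι → R) :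
    x ⬝ᵥ (Uᵀ * M * U) *ᵥ x = (U *ᵥ x) ⬝ᵥ M *ᵥ (U *ᵥ x) := by
  simp only [← mulVec_mulVec, dotProduct_mulVec, vecMul_transpose]

variable [DecidableEq ι]

lemma mulVec_ne_zero [CommRing R] (U : GL ι R) {x : ι → R} (hx : x ≠ 0) : U.1 *ᵥ x ≠ 0 := by
  simpa only [mulVec_zero] using (mulVec_injective_of_isUnit U.isUnit).ne hx

lemma posDef_transpose_mul_mul_same [CommRing R] [PartialOrder R] [StarRing R] [TrivialStar R]
    {M : Matrix ι ι R} (hM : M.PosDef) (U : GL ι R) : (U.1ᵀ * M * U.1).PosDef := by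
  simpa only [conjTranspose_eq_transpose_of_trivial] using
    hM.conjTranspose_mul_mul_same (mulVec_injective_of_isUnit U.isUnit)

lemma det_transpose_mul_mul_same (M : Matrix ι ι ℤ) (U : GL ι ℤ) :
    (U.1ᵀ * M * U.1).det = M.det := by
  have hU : U.1.det * U.1.det = 1 := Int.isUnit_mul_self ((isUnit_iff_isUnit_det _).1 U.isUnit)
  rw [det_mul, det_mul, det_transpose]
  linear_combination M.det * hU

theorem exists_GL_mulVec_single_eq [CommRing R] [IsDomain R] [IsPrincipalIdealRing R] (i : ι)
    (x : ι → R) : ∃ (U : GL ι R) (d : R), U.1 *ᵥ Pi.single i d = x := by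
  obtain ⟨b, d, hd⟩ := exists_basis_smul_eq i x
  obtain ⟨U, hU⟩ := GeneralLinearGroup.toLin.surjective (.ofLinearEquiv b.equivFun.symm)
  refine ⟨U, d, ?_⟩
  calc U.1 *ᵥ Pi.single i d = (GeneralLinearGroup.toLin U).1 (Pi.single i d) := rfl
    _ = b.equivFun.symm (Pi.single i d) := by rw [hU]; rfl
    _ = x := by simpa [Module.Basis.equivFun_symm_apply, Pi.single_apply] using hd

end Congruence

section Hermite

variable {n : ℕ} {M : Matrix (Fin (n + 1)) (Fin (n + 1)) ℤ}

/-- The entry `M 0 0` is a lower bound for the quadratic form of `M` on nonzero integral vectors,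
hence its minimum, attained at the first basis vector. -/
def IsPivotMinimal (M : Matrix (Fin (n + 1)) (Fin (n + 1)) ℤ) : Prop :=
  ∀ x : Fin (n + 1) → ℤ, x ≠ 0 → M 0 0 ≤ x ⬝ᵥ M *ᵥ x

theorem exists_isPivotMinimal_transpose_mul_mul (hM : M.PosDef) :
    ∃ U : GL (Fin (n + 1)) ℤ, IsPivotMinimal (U.1ᵀ * M * U.1) := by
  let Q : (Fin (n + 1) → ℤ) → ℤ := fun x => x ⬝ᵥ M *ᵥ x
  have hQpos : ∀ x ≠ 0, 0 < Q x := (posDef_iff_isSymm_and_dotProduct_mulVec_pos.1 hM).2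
  obtain ⟨m, hm, hmin⟩ := (measure fun x => (Q x).toNat).wf.has_min {x | x ≠ 0}
    ⟨Pi.single 0 1, by simp⟩
  obtain ⟨U, d, rfl⟩ := exists_GL_mulVec_single_eq 0 m
  have hd : d ≠ 0 := by
    rintro rfl
    simp at hm
  have hpivot : 0 < (U.1ᵀ * M * U.1) 0 0 := (posDef_transpose_mul_mul_same hM U).diag_pos
  refine ⟨U, fun x hx => ?_⟩
  have hUx : U.1 *ᵥ x ≠ 0 := mulVec_ne_zero U hx
  have hQmin : (Q (U.1 *ᵥ Pi.single 0 d)).toNat ≤ (Q (U.1 *ᵥ x)).toNat := not_lt.1 (hmin _ hUx)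
  calc (U.1ᵀ * M * U.1) 0 0 ≤ d ^ 2 * (U.1ᵀ * M * U.1) 0 0 :=
        le_mul_of_one_le_left hpivot.le (Int.add_one_le_of_lt (sq_pos_of_ne_zero hd))
    _ = Q (U.1 *ᵥ Pi.single 0 d) := by
        simp only [Q, ← dotProduct_transpose_mul_mul_mulVec]
        simp only [mulVec_single, op_smul_eq_smul, zsmul_eq_mul, single_dotProduct, Pi.mul_apply,
          Pi.intCast_apply, Int.cast_eq, col_apply]
        ring
    _ ≤ Q (U.1 *ᵥ x) := by have := hQpos _ hUx; omega
    _ = x ⬝ᵥ (U.1ᵀ * M * U.1) *ᵥ x := (dotProduct_transpose_mul_mul_mulVec _ _ _).symm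

lemma exists_four_mul_mul_add_sq_le {a : ℤ} (ha : 0 < a) (s : ℤ) :
    ∃ k : ℤ, 4 * (a * k + s) ^ 2 ≤ a ^ 2 := by
  have hdiv := Int.emod_add_mul_ediv (2 * s + a) (2 * a)
  have hnonneg := Int.emod_nonneg (2 * s + a) (by omega : 2 * a ≠ 0)
  have hlt := Int.emod_lt_of_pos (2 * s + a) (by omega : 0 < 2 * a)
  refine ⟨-((2 * s + a) / (2 * a)), ?_⟩
  have hsq : (2 * (a * -((2 * s + a) / (2 * a)) + s)) ^ 2 ≤ a ^ 2 :=
    sq_le_sq' (by linarith) (by linarith)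
  linarith

lemma IsPivotMinimal.three_mul_sq_le (hmin : IsPivotMinimal M) (hM : M.PosDef) {w : Fin n → ℤ}
    (hw : w ≠ 0) : 3 * M 0 0 ^ 2 ≤ 4 * (w ⬝ᵥ chioCondensation M *ᵥ w) := by
  obtain ⟨hsymm, hpivot, -⟩ := posDef_iff_posDef_chioCondensation.1 hM
  obtain ⟨k, hk⟩ := exists_four_mul_mul_add_sq_le hpivot (vecTail (M 0) ⬝ᵥ w)
  have hle : M 0 0 ^ 2 ≤ M 0 0 * (vecCons k w ⬝ᵥ M *ᵥ vecCons k w) := by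
    rw [sq]
    exact mul_le_mul_of_nonneg_left (hmin _ (by simp [hw])) hpivot.le
  rw [apply_zero_zero_mul_dotProduct_mulVec_vecCons hsymm] at hle
  linarith

/-- Hermite's inequality `a ≤ (4 / 3) ^ (n / 2) * det M ^ (1 / (n + 1))` for the minimum `a` of a
positive definite form in `n + 1` variables, with powers and denominators cleared. -/
theorem IsPivotMinimal.pow_le_det (hmin : IsPivotMinimal M) (hM : M.PosDef) :
    3 ^ (n + 1).choose 2 * M 0 0 ^ (n + 1) ≤ 4 ^ (n + 1).choose 2 * M.det := by
  induction n with
  | zero => simp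
  | succ n ih =>
    obtain ⟨-, hpivot, hC⟩ := posDef_iff_posDef_chioCondensation.1 hM
    set C := chioCondensation M
    obtain ⟨V, hV⟩ := exists_isPivotMinimal_transpose_mul_mul hC
    set c := (V.1ᵀ * C * V.1) 0 0
    have hc_le : 3 ^ (n + 1).choose 2 * c ^ (n + 1) ≤ 4 ^ (n + 1).choose 2 * C.det := by
      simpa only [det_transpose_mul_mul_same] using ih hV (posDef_transpose_mul_mul_same hC V)
    have hc_eq : c = (V.1 *ᵥ Pi.single 0 1) ⬝ᵥ C *ᵥ (V.1 *ᵥ Pi.single 0 1) := by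
      rw [← dotProduct_transpose_mul_mul_mulVec, mulVec_single_one, single_one_dotProduct,
        col_apply]
    have hle_c : 3 * M 0 0 ^ 2 ≤ 4 * c :=
      hc_eq ▸ hmin.three_mul_sq_le hM (mulVec_ne_zero V (by simp))
    have hdet : M 0 0 * C.det = M 0 0 ^ (n + 1) * M.det :=
      apply_zero_zero_mul_det_chioCondensation M
    have hchoose : (n + 2).choose 2 = (n + 1) + (n + 1).choose 2 := by
      rw [Nat.choose_succ_succ', Nat.choose_one_right]
    refine le_of_mul_le_mul_left ?_ (pow_pos hpivot (n + 1))
    calc M 0 0 ^ (n + 1) * (3 ^ (n + 2).choose 2 * M 0 0 ^ (n + 2))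
        = M 0 0 * (3 ^ (n + 1).choose 2 * (3 * M 0 0 ^ 2) ^ (n + 1)) := by rw [hchoose]; ring
      _ ≤ M 0 0 * (3 ^ (n + 1).choose 2 * (4 * c) ^ (n + 1)) := by gcongr
      _ = M 0 0 * (4 ^ (n + 1) * (3 ^ (n + 1).choose 2 * c ^ (n + 1))) := by ring
      _ ≤ M 0 0 * (4 ^ (n + 1) * (4 ^ (n + 1).choose 2 * C.det)) := by gcongr
      _ = M 0 0 ^ (n + 1) * (4 ^ (n + 2).choose 2 * M.det) := by
        rw [hchoose]; linear_combination 4 ^ (n + 1) * 4 ^ (n + 1).choose 2 * hdet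

lemma IsPivotMinimal.eq_one (hmin : IsPivotMinimal M) (hM : M.PosDef) (hdet : M.det = 1)
    (hn : n < 5) : M 0 0 = 1 := by
  have hpivot : 0 < M 0 0 := hM.diag_pos
  have hHermite := hmin.pow_le_det hM
  rw [hdet, mul_one] at hHermite
  by_contra hne
  have htwo : (2 : ℤ) ^ (n + 1) ≤ M 0 0 ^ (n + 1) := pow_le_pow_left₀ (by norm_num) (by omega) _
  interval_cases n <;> norm_num [Nat.choose] at hHermite htwo <;> linarith

/-- The bound `5` is where Hermite's inequality stops forcing the minimum to be `1`. -/
theorem exists_eq_transpose_mul_self {n : ℕ} (hn : n ≤ 5) {M : Matrix (Fin n) (Fin n) ℤ}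
    (hM : M.PosDef) (hdet : M.det = 1) : ∃ W : Matrix (Fin n) (Fin n) ℤ, M = Wᵀ * W := by
  induction n with
  | zero => exact ⟨1, Subsingleton.elim _ _⟩
  | succ n ih =>
    obtain ⟨U, hmin⟩ := exists_isPivotMinimal_transpose_mul_mul hM
    set M' := U.1ᵀ * M * U.1 with hM'
    have hdet' : M'.det = 1 := (det_transpose_mul_mul_same M U).trans hdet
    have hpos' : M'.PosDef := posDef_transpose_mul_mul_same hM U
    obtain ⟨hsymm, -, hC⟩ := posDef_iff_posDef_chioCondensation.1 hpos'
    have hpivot : M' 0 0 = 1 := hmin.eq_one hpos' hdet' hn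
    have hdetC : (chioCondensation M').det = 1 := by
      simpa [hpivot, hdet'] using apply_zero_zero_mul_det_chioCondensation M'
    obtain ⟨V, hV⟩ := ih (by omega) hC hdetC
    obtain ⟨W, hW⟩ := exists_eq_transpose_mul_self_of_chioCondensation hsymm hpivot hV
    have hU : U.1 * U⁻¹.1 = 1 := U.mul_inv
    refine ⟨W * U⁻¹.1, ?_⟩
    calc M = (U.1 * U⁻¹.1)ᵀ * M * (U.1 * U⁻¹.1) := by rw [hU, transpose_one, one_mul, mul_one]
      _ = U⁻¹.1ᵀ * M' * U⁻¹.1 := by simp only [hM', transpose_mul, Matrix.mul_assoc]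
      _ = (W * U⁻¹.1)ᵀ * (W * U⁻¹.1) := by simp only [hW, transpose_mul, Matrix.mul_assoc]

end Hermite

end PosDef

/-! ### The three-square theorem -/

/-- Sums of three integral squares, the integers represented by the form `x² + y² + z²`. -/
def IsSumThreeSq (n : ℤ) : Prop :=
  ∃ x y z : ℤ, n = x ^ 2 + y ^ 2 + z ^ 2

theorem isSumThreeSq_diag_of_posDef {M : Matrix (Fin 3) (Fin 3) ℤ} (hM : M.PosDef)
    (hdet : M.det = 1) (i : Fin 3) : IsSumThreeSq (M i i) := by
  obtain ⟨W, rfl⟩ := exists_eq_transpose_mul_self (by norm_num) hM hdet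
  exact ⟨W 0 i, W 1 i, W 2 i, by simp [Matrix.mul_apply, Fin.sum_univ_three, pow_two]⟩

theorem isSumThreeSq_of_dvd_sq_add {n d r : ℤ} (hd : 0 < d) (hpos : 0 < d * n - 1)
    (hdvd : d * n - 1 ∣ r ^ 2 + d) : IsSumThreeSq n := by
  obtain ⟨a, ha⟩ := hdvd
  have ha0 : 0 < a := pos_of_mul_pos_right (ha ▸ by positivity) hpos.le
  let M : Matrix (Fin 3) (Fin 3) ℤ := !![a, r, 1; r, d * n - 1, 0; 1, 0, n]
  have hsymm : M.IsSymm := by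
    ext i j
    fin_cases i <;> fin_cases j <;> rfl
  have hdet : M.det = 1 := by
    simp only [M, Matrix.det_fin_three, Matrix.of_apply, Matrix.cons_val]
    linear_combination -n * ha
  have hchio : chioCondensation M = !![d, -r; -r, a * n - 1] := by
    ext i j
    fin_cases i <;> fin_cases j
    · change a * (d * n - 1) - r * r = d
      linear_combination -ha
    all_goals simp [chioCondensation, M]
  have hchio₂ : chioCondensation (chioCondensation M) = !![a] := by
    rw [hchio]
    ext i j
    fin_cases i; fin_cases j
    change d * (a * n - 1) - -r * -r = a
    linear_combination -ha
  have hM : M.PosDef := by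
    refine posDef_iff_posDef_chioCondensation.2 ⟨hsymm, ha0,
      posDef_iff_posDef_chioCondensation.2 ⟨isSymm_chioCondensation hsymm, ?_, ?_⟩⟩
    · simpa [hchio] using hd
    · have hdiag : !![a] = Matrix.diagonal fun _ => a := by
        ext i j
        fin_cases i; fin_cases j
        rfl
      exact hchio₂ ▸ hdiag ▸ Matrix.PosDef.diagonal fun _ => ha0
  exact isSumThreeSq_diag_of_posDef hM hdet 2

open scoped NumberTheorySymbols in
lemma jacobiSym_neg_eq {d p : ℕ} (hd : Odd d) (hp : Odd p) (h : p % 4 = 1 ∨ d % 4 = 3) :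
    J(-(d : ℤ) | p) = J(p | d) := by
  rw [neg_eq_neg_one_mul, jacobiSym.mul_left, jacobiSym.at_neg_one hp]
  by_cases hp4 : p % 4 = 1
  · rw [ZMod.χ₄_nat_one_mod_four hp4, one_mul,
      jacobiSym.quadratic_reciprocity_one_mod_four' hd hp4]
  · have hp4' : p % 4 = 3 := by grind
    rw [ZMod.χ₄_nat_three_mod_four hp4',
      jacobiSym.quadratic_reciprocity_three_mod_four (by omega) hp4']
    ring

open scoped NumberTheorySymbols in
lemma jacobiSym_eq_one_of_mul_eq {d : ℕ} {m n p : ℤ} (hm : J(-m | d) = 1)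
    (h : d * n = m * p + 1) : J(p | d) = 1 := by
  calc J(p | d) = J(-m * p | d) := by rw [jacobiSym.mul_left, hm, one_mul]
    _ = J(1 | d) := jacobiSym.mod_left' (by
        rw [show -m * p = 1 + d * -n by linear_combination h, Int.add_mul_emod_self_left])
    _ = 1 := jacobiSym.one_left d

open scoped NumberTheorySymbols in
lemma exists_dvd_sq_add_of_jacobiSym {p : ℕ} [Fact p.Prime] {d : ℤ} (h : J(-d | p) = 1) :
    ∃ r : ℤ, (p : ℤ) ∣ r ^ 2 + d := by
  obtain ⟨s, hs⟩ := ZMod.isSquare_of_jacobiSym_eq_one h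
  obtain ⟨r, rfl⟩ := ZMod.intCast_surjective s
  refine ⟨r, (ZMod.intCast_zmod_eq_zero_iff_dvd _ p).1 ?_⟩
  push_cast at hs ⊢
  linear_combination -hs

lemma exists_two_mul_dvd_sq_add {p d r : ℤ} (hp : Odd p) (hd : Odd d) (h : p ∣ r ^ 2 + d) :
    ∃ r' : ℤ, 2 * p ∣ r' ^ 2 + d := by
  obtain ⟨r', hr', hodd⟩ : ∃ r' : ℤ, p ∣ r' ^ 2 + d ∧ Odd r' := by
    rcases Int.even_or_odd r with hr | hr
    · refine ⟨r + p, ?_, hr.add_odd hp⟩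
      rw [show (r + p) ^ 2 + d = r ^ 2 + d + p * (2 * r + p) by ring]
      exact dvd_add h (dvd_mul_right _ _)
    · exact ⟨r, h, hr⟩
  exact ⟨r', (Int.isCoprime_two_left.2 hp).mul_dvd (hodd.pow.add_odd hd).two_dvd hr'⟩

lemma exists_prime_eq_mul_add {q a : ℕ} (hq : q ≠ 0) (h : a.Coprime q) :
    ∃ p j : ℕ, p.Prime ∧ p = q * j + a := by
  obtain ⟨p, hap, hp, hmod⟩ := Nat.forall_exists_prime_gt_and_modEq a hq h
  obtain ⟨j, hj⟩ := (Nat.modEq_iff_dvd' hap.le).1 hmod.symm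
  exact ⟨p, j, hp, by omega⟩

lemma coprime_four_mul_of_mul_eq {c n m e : ℕ} (he : Odd e) (h : c * n = m * e + 1) :
    e.Coprime (4 * n) := by
  have hfour : e.Coprime (2 ^ 2) := (Nat.coprime_two_right.2 he).pow_right 2
  have hcn : e.Coprime (c * n) := by simp [h]
  exact hfour.mul_right (hcn.coprime_dvd_right (dvd_mul_left n c))

/-- Dirichlet's theorem gives a prime `p = 4nj + e`, and `d = 4mj + c` then satisfies
`dn - 1 = mp` with the residues of `c` and `e` passed on to `d` and `p`. -/
theorem isSumThreeSq_of_mul_eq {n c m e : ℕ} (he : Odd e) (h : c * n = m * e + 1)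
    (hm : m = 1 ∧ c % 4 = 1 ∨ m = 2 ∧ (c % 8 = 1 ∨ c % 8 = 3)) (hec : e % 4 = 1 ∨ c % 4 = 3) :
    IsSumThreeSq n := by
  have hn : n ≠ 0 := by rintro rfl; omega
  obtain ⟨p, j, hp, hpj⟩ := exists_prime_eq_mul_add (by omega) (coprime_four_mul_of_mul_eq he h)
  have : Fact p.Prime := ⟨hp⟩
  rw [mul_assoc] at hpj
  obtain ⟨d, hdj⟩ : ∃ d, d = 4 * (m * j) + c := ⟨_, rfl⟩
  have hdn : (d : ℤ) * n = m * p + 1 := by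
    zify at h hpj hdj
    rw [hdj, hpj]
    linear_combination h
  have hp_odd : Odd p := by grind
  have hd_odd : Odd d := by grind
  have hneg : jacobiSym (-m) d = 1 := by
    rcases hm with ⟨rfl, hc⟩ | ⟨rfl, hc⟩
    · rw [Nat.cast_one, jacobiSym.at_neg_one hd_odd, ZMod.χ₄_nat_one_mod_four (by omega)]
    · rw [Nat.cast_ofNat, jacobiSym.at_neg_two hd_odd, ZMod.χ₈'_nat_eq_if_mod_eight,
        if_neg (by omega), if_pos (by omega)]
  obtain ⟨r, hr⟩ := exists_dvd_sq_add_of_jacobiSym (p := p) (d := d) <|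
    (jacobiSym_neg_eq hd_odd hp_odd (by omega)).trans (jacobiSym_eq_one_of_mul_eq hneg hdn)
  obtain ⟨r', hr'⟩ : ∃ r' : ℤ, (m * p : ℤ) ∣ r' ^ 2 + d := by
    rcases hm with ⟨rfl, -⟩ | ⟨rfl, -⟩
    · exact ⟨r, by simpa using hr⟩
    · exact exists_two_mul_dvd_sq_add (by exact_mod_cast hp_odd) (by exact_mod_cast hd_odd) hr
  have hmp : (d : ℤ) * n - 1 = m * p := by linarith
  have hmp_pos : 0 < m * p := Nat.mul_pos (by omega) hp.pos
  exact isSumThreeSq_of_dvd_sq_add (by exact_mod_cast hd_odd.pos)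
    (hmp ▸ by exact_mod_cast hmp_pos) (hmp ▸ hr')

lemma not_isSumThreeSq_of_emod_eight {n : ℤ} (hn : n % 8 = 7) : ¬ IsSumThreeSq n := by
  rintro ⟨x, y, z, rfl⟩
  have hne : ∀ x y z : ZMod 8, x ^ 2 + y ^ 2 + z ^ 2 ≠ 7 := by decide
  have heq : ((x ^ 2 + y ^ 2 + z ^ 2 : ℤ) : ZMod 8) = (7 : ℤ) :=
    (ZMod.intCast_eq_intCast_iff _ _ 8).2 hn
  exact hne x y z (by exact_mod_cast heq)

theorem isSumThreeSq_iff_of_not_four_dvd {n : ℕ} (hn : ¬ 4 ∣ n) :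
    IsSumThreeSq n ↔ n % 8 ≠ 7 := by
  refine ⟨fun h h7 => not_isSumThreeSq_of_emod_eight (by omega) h, fun h7 => ?_⟩
  obtain h | h | h : n % 4 = 2 ∨ n % 8 = 3 ∨ n % 4 = 1 := by omega
  · exact isSumThreeSq_of_mul_eq (c := 1) (m := 1) (e := n - 1) (by grind) (by omega)
      (by omega) (by omega)
  · exact isSumThreeSq_of_mul_eq (c := 1) (m := 2) (e := (n - 1) / 2) (by grind) (by omega)
      (by omega) (by omega)
  · exact isSumThreeSq_of_mul_eq (c := 3) (m := 2) (e := (3 * n - 1) / 2) (by grind) (by omega)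
      (by omega) (by omega)

lemma even_of_four_dvd_sum_three_sq {x y z : ℤ} (h : 4 ∣ x ^ 2 + y ^ 2 + z ^ 2) :
    Even x ∧ Even y ∧ Even z := by
  have hsq (t : ℤ) : Even t ∧ t ^ 2 % 4 = 0 ∨ t ^ 2 % 4 = 1 := by
    rcases Int.even_or_odd t with ht | ht
    · exact .inl ⟨ht, Int.emod_eq_zero_of_dvd (pow_dvd_pow_of_dvd ht.two_dvd 2)⟩
    · exact .inr (Int.sq_mod_four_eq_one_of_odd ht)
  grind [hsq x, hsq y, hsq z]

lemma isSumThreeSq_four_mul_iff {n : ℤ} : IsSumThreeSq (4 * n) ↔ IsSumThreeSq n := by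
  constructor
  · rintro ⟨x, y, z, h⟩
    obtain ⟨⟨x, rfl⟩, ⟨y, rfl⟩, ⟨z, rfl⟩⟩ := even_of_four_dvd_sum_three_sq (h ▸ dvd_mul_right 4 n)
    exact ⟨x, y, z, by linarith⟩
  · rintro ⟨x, y, z, rfl⟩
    exact ⟨2 * x, 2 * y, 2 * z, by ring⟩

lemma isSumThreeSq_four_pow_mul_iff (k : ℕ) {n : ℤ} :
    IsSumThreeSq (4 ^ k * n) ↔ IsSumThreeSq n := by
  induction k with
  | zero => rw [pow_zero, one_mul]
  | succ k ih => rw [pow_succ', mul_assoc, isSumThreeSq_four_mul_iff, ih]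

/-- The Legendre–Gauss three-square theorem. -/
theorem isSumThreeSq_iff (n : ℕ) :
    IsSumThreeSq n ↔ ¬ ∃ k l : ℕ, n = 4 ^ k * (8 * l + 7) := by
  constructor
  · rintro h ⟨k, l, rfl⟩
    push_cast at h
    exact not_isSumThreeSq_of_emod_eight (by omega) ((isSumThreeSq_four_pow_mul_iff k).1 h)
  · intro h
    rcases eq_or_ne n 0 with rfl | hn
    · exact ⟨0, 0, 0, by simp⟩
    obtain ⟨k, m, hm, rfl⟩ := Nat.exists_eq_pow_mul_and_not_dvd hn 4 (by norm_num)
    have hm7 : m % 8 ≠ 7 := fun hm7 => h ⟨k, m / 8, by rw [← hm7, Nat.div_add_mod]⟩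
    push_cast
    exact (isSumThreeSq_four_pow_mul_iff k).2 ((isSumThreeSq_iff_of_not_four_dvd hm).2 hm7)

/-! ### Passing between the two forms -/

lemma three_dvd_sq_sub_sq {a b c : ℤ} (h : 3 ∣ a ^ 2 + b ^ 2 + c ^ 2) : 3 ∣ a ^ 2 - b ^ 2 := by
  have hzmod : ∀ a b c : ZMod 3, a ^ 2 + b ^ 2 + c ^ 2 = 0 → a ^ 2 - b ^ 2 = 0 := by decide
  have hcast := (ZMod.intCast_zmod_eq_zero_iff_dvd _ 3).2 h
  refine (ZMod.intCast_zmod_eq_zero_iff_dvd _ 3).1 ?_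
  push_cast at hcast ⊢
  exact hzmod _ _ _ hcast

lemma exists_sq_eq_and_dvd_sub {R : Type*} [CommRing R] {p a b : R} (hp : Prime p)
    (h : p ∣ a ^ 2 - b ^ 2) : ∃ b' : R, b' ^ 2 = b ^ 2 ∧ p ∣ a - b' := by
  rw [sq_sub_sq] at h
  rcases hp.dvd_or_dvd h with h | h
  · exact ⟨-b, neg_sq b, by rwa [sub_neg_eq_add]⟩
  · exact ⟨b, rfl, h⟩

theorem exists_eq_two_mul_sq_add_iff_isSumThreeSq (n : ℤ) :
    (∃ x y z : ℤ, n = 2 * x ^ 2 + (y ^ 2 + y * z + z ^ 2)) ↔ IsSumThreeSq (6 * n) := by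
  constructor
  · rintro ⟨t, u, v, rfl⟩
    exact ⟨2 * t + 2 * u + v, 2 * t - u + v, 2 * t - u - 2 * v, by ring⟩
  · rintro ⟨a, b, c, h⟩
    have hb3 : 3 ∣ a ^ 2 - b ^ 2 := three_dvd_sq_sub_sq (c := c) (by omega)
    have hc3 : 3 ∣ a ^ 2 - c ^ 2 := three_dvd_sq_sub_sq (c := b) (by omega)
    obtain ⟨b', hb, hab⟩ := exists_sq_eq_and_dvd_sub Int.prime_three hb3
    obtain ⟨c', hc, hac⟩ := exists_sq_eq_and_dvd_sub Int.prime_three hc3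
    rw [← hb, ← hc] at h
    have hpar : Even (a + b' + c') := by
      have : Even (a ^ 2 + b' ^ 2 + c' ^ 2) := h ▸ (by decide : Even (6 : ℤ)).mul_right n
      simpa [Int.even_add, Int.even_pow] using this
    obtain ⟨t, ht⟩ : ∃ t, a + b' + c' = 6 * t := ⟨(a + b' + c') / 6, by grind⟩
    obtain ⟨u, hu⟩ := hab
    obtain ⟨v, hv⟩ : ∃ v, b' - c' = 3 * v := ⟨(b' - c') / 3, by omega⟩
    refine ⟨t, u, v, ?_⟩
    obtain rfl : a = 2 * t + 2 * u + v := by linarith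
    obtain rfl : b' = 2 * t - u + v := by linarith
    obtain rfl : c' = 2 * t - u - 2 * v := by linarith
    linarith

lemma exists_six_mul_eq_iff (n : ℕ) :
    (∃ k l : ℕ, 6 * n = 4 ^ k * (8 * l + 7)) ↔ ∃ k l : ℕ, n = 4 ^ k * (16 * l + 10) := by
  constructor
  · rintro ⟨_ | k, l, h⟩
    · omega
    · have hthree : 3 ∣ 8 * l + 7 :=
        (Nat.Coprime.pow_right (k + 1) (by norm_num : Nat.Coprime 3 4)).dvd_of_dvd_mul_left
          (h ▸ Dvd.intro (2 * n) (by ring))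
      obtain ⟨m, rfl⟩ : ∃ m, l = 3 * m + 1 := ⟨l / 3, by omega⟩
      exact ⟨k, m, Nat.eq_of_mul_eq_mul_left (by norm_num : 0 < 6) (by rw [h]; ring)⟩
  · rintro ⟨k, l, rfl⟩
    exact ⟨k + 1, 3 * l + 1, by ring⟩

theorem stmt_5 (n : ℕ) :
    (∃ x y z : ℤ, (n : ℤ) = 2 * x ^ 2 + (y ^ 2 + y * z + z ^ 2)) ↔
    ¬ ∃ k l : ℕ, n = 4 ^ k * (16 * l + 10) := by
  rw [exists_eq_two_mul_sq_add_iff_isSumThreeSq, ← exists_six_mul_eq_iff]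
  exact_mod_cast isSumThreeSq_iff (6 * n)
end

section
/- Let a, b be positive integers with a ≤ b. If the quadratic form f^{a,b}_1(x,y,z,w) = a·x² + b·y² + (z² + z·w + w²) represents each of the integers 1, 2, 6, 10 (with x, y, z, w ∈ ℤ), then it represents every nonnegative integer. -/
/-!
The values `2`, `6`, `10` force `a = 1, b ≤ 6` or `a = 2, b ≤ 10`. For these pairs one subtracts
`b y²` with a small `y` and represents the rest by `x² + (z² + zw + w²)` or `2x² + (z² + zw + w²)`,
which represent every positive integer outside `3ℤ`, respectively every positive `m` with `4 ∤ m`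
and `m ≢ 10 (mod 16)`.

The ternary statements follow Dirichlet's proof of the three squares theorem. To represent `m`, one
looks for a positive definite form of half-discriminant `Δ = 3` or `6` having `m` as a diagonal
entry. Such a form exists as soon as `m D - b q² = Δ` where `-D` is a square modulo `4b`. By
Dirichlet's theorem `b` can be chosen prime, up to a small factor, and then reciprocity evaluates
the Jacobi symbol.

Hermite reduction shows that there is one class for `Δ = 3` and that there are two for `Δ = 6`; the
latter are told apart by their minors modulo `3`. That does not help for `3 ∣ m`, where instead
`3 (x² + y² + z² + yz + xz + xy) = 2 (x + y + z)² + (u² + uv + v²)` with `u = x - y`, `v = y - z`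
reduces the question to the only class for `Δ = 2`.
-/

open Matrix
open scoped NumberTheorySymbols

/-! ### Primes and Jacobi symbols -/

theorem exists_two_mul_abs_add_mul_le {a : ℤ} (ha : 0 < a) (r : ℤ) :
    ∃ t : ℤ, 2 * |r + a * t| ≤ a := by
  lift a to ℕ using ha.le
  have hlow := Int.le_bmod (x := r) (m := a) (by omega)
  have hhigh := Int.bmod_le (x := r) (m := a) (by omega)
  have hbdiv := Int.bmod_add_bdiv r a
  refine ⟨-r.bdiv a, ?_⟩
  rw [show r + a * -r.bdiv a = r.bmod a by linarith]
  rcases abs_cases (r.bmod a) with ⟨habs, -⟩ | ⟨habs, -⟩ <;> omega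

theorem exists_prime_eq_mul_add_s7 {A B : ℤ} (hA : 0 < A) (hBA : IsCoprime B A) :
    ∃ j p : ℕ, p.Prime ∧ (p : ℤ) = A * j + B := by
  lift A to ℕ using hA.le
  obtain ⟨p, hp, hprime, hmod⟩ :=
    Nat.forall_exists_prime_gt_and_zmodEq B.toNat (by omega : A ≠ 0) hBA
  obtain ⟨j, hj⟩ := hmod.symm.dvd
  have hj0 : 0 ≤ j := by
    refine (pos_of_mul_pos_right (a := (A : ℤ)) ?_ hA.le).le
    omega
  lift j to ℕ using hj0
  exact ⟨j, p, hprime, by omega⟩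

theorem exists_odd_dvd_sq_add {p : ℕ} (hp : p.Prime) (hodd : Odd p) {k : ℤ}
    (h : J(-k | p) = 1) : ∃ r : ℤ, Odd r ∧ (p : ℤ) ∣ r ^ 2 + k := by
  have : Fact p.Prime := ⟨hp⟩
  obtain ⟨s, hs⟩ := ZMod.isSquare_of_jacobiSym_eq_one h
  have hdvd (r : ℤ) (hr : (r : ZMod p) = s) : (p : ℤ) ∣ r ^ 2 + k := by
    rw [← ZMod.intCast_zmod_eq_zero_iff_dvd]
    push_cast at hs ⊢
    rw [hr]
    linear_combination -hs
  rcases Int.even_or_odd s.valMinAbs with heven | hodd'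
  · exact ⟨s.valMinAbs + p, heven.add_odd (by exact_mod_cast hodd), hdvd _ (by simp)⟩
  · exact ⟨s.valMinAbs, hodd', hdvd _ (by simp)⟩

theorem jacobiSym_neg_left_of_mod_four_eq_one {k p : ℕ} (hk : Odd k) (hp : p % 4 = 1) :
    J(-k | p) = J(p | k) := by
  rw [jacobiSym.neg _ (Nat.odd_iff.2 (by omega)), ZMod.χ₄_nat_one_mod_four hp, one_mul,
    jacobiSym.quadratic_reciprocity_one_mod_four' hk hp]

theorem jacobiSym_neg_left_of_mod_four_eq_three {k p : ℕ} (hk : k % 4 = 3) (hp : Odd p) :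
    J(-k | p) = J(p | k) := by
  rcases Nat.odd_mod_four_iff.1 (Nat.odd_iff.1 hp) with hp4 | hp4
  · exact jacobiSym_neg_left_of_mod_four_eq_one (Nat.odd_iff.2 (by omega)) hp4
  · rw [jacobiSym.neg _ hp, ZMod.χ₄_nat_three_mod_four hp4,
      jacobiSym.quadratic_reciprocity_three_mod_four hk hp4, neg_mul_neg, one_mul]

theorem jacobiSym_neg_eq_one_of_four_mul {g k p : ℕ} {m : ℤ} (hg : g % 4 = 3) (hk : Odd k)
    (hkg : (g : ℤ) ∣ k - 1) (hp : p % 4 = 1) (h : 4 * (m * k) - g = p) : J(-k | p) = 1 :=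
  calc J(-k | p) = J(p | k) := jacobiSym_neg_left_of_mod_four_eq_one hk hp
    _ = J(-g | k) := jacobiSym.mod_left' <| Int.ModEq.symm <|
        Int.modEq_of_dvd ⟨4 * m, by linear_combination -h⟩
    _ = J(k | g) := jacobiSym_neg_left_of_mod_four_eq_three hg hk
    _ = J(1 | g) := jacobiSym.mod_left' (Int.modEq_of_dvd hkg).symm
    _ = 1 := jacobiSym.one_left g

theorem jacobiSym_neg_eq_one_of_two_mul {g k p : ℕ} {m : ℤ} (hg : Odd g) (hk : k % 4 = 1)
    (hkg : (g : ℤ) ∣ k + 1) (hp : p % 4 = g % 4) (h : 2 * (m * k) - g = p) : J(-k | p) = 1 := by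
  have hkodd : Odd k := Nat.odd_iff.2 (by omega)
  have hpodd : Odd p := by
    rw [Nat.odd_iff] at hg ⊢
    omega
  calc J(-k | p) = ZMod.χ₄ p * J(p | k) := by
        rw [jacobiSym.neg _ hpodd, jacobiSym.quadratic_reciprocity_one_mod_four hk hpodd]
    _ = ZMod.χ₄ g * J(p | k) := by rw [ZMod.χ₄_nat_mod_four, hp, ← ZMod.χ₄_nat_mod_four]
    _ = ZMod.χ₄ g * J(-g | k) := by
        congr 1
        exact jacobiSym.mod_left' (Int.modEq_of_dvd ⟨2 * m, by linear_combination -h⟩).symm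
    _ = ZMod.χ₄ g * J(k | g) := by rw [jacobiSym_neg_left_of_mod_four_eq_one hg hk]
    _ = ZMod.χ₄ g * J(-1 | g) := by
        congr 1
        exact jacobiSym.mod_left' (Int.modEq_of_dvd (by simpa using hkg)).symm
    _ = J(-1 | g) ^ 2 := by rw [jacobiSym.at_neg_one hg, sq]
    _ = 1 := jacobiSym.sq_one (by simp)

theorem jacobiSym_neg_eq_one_of_two_mul_sq {g D p : ℕ} {m e : ℤ} (hg : Odd g) (hD : D % 8 = 3)
    (hgD : (g : ℤ) ∣ D + 1) (hp : Odd p) (he : IsCoprime e D) (h : m * D - g = 2 * e ^ 2 * p) :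
    J(-D | p) = 1 := by
  have hDodd : Odd D := Nat.odd_iff.2 (by omega)
  have hg1 : J(g | D) = 1 := by
    rw [← jacobiSym_neg_left_of_mod_four_eq_three (by omega) hg, ← jacobiSym.one_left g]
    exact jacobiSym.mod_left' (Int.modEq_of_dvd (by simpa [add_comm] using hgD))
  have htwo : J(2 | D) = -1 := by
    rw [jacobiSym.at_two hDodd, ZMod.χ₈_nat_mod_eight, hD]
    rfl
  have hprod : J(2 * e ^ 2 * p | D) = -1 := by
    calc J(2 * e ^ 2 * p | D) = J(-g | D) :=
        jacobiSym.mod_left' (Int.modEq_of_dvd ⟨m, by linear_combination -h⟩).symm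
      _ = -1 := by
        rw [jacobiSym.neg _ hDodd, ZMod.χ₄_nat_three_mod_four (by omega), hg1, mul_one]
  rw [jacobiSym.mul_left, jacobiSym.mul_left, htwo,
    jacobiSym.sq_one' (Int.isCoprime_iff_gcd_eq_one.1 he)] at hprod
  rw [jacobiSym_neg_left_of_mod_four_eq_three (by omega) hp]
  linarith

theorem isCoprime_two_pow_mul_mul {g m u x : ℤ} (n : ℕ) (hx : Odd x) (hmg : IsCoprime m g)
    (hug : IsCoprime u g) (hdvd : x ∣ m * u - g) : IsCoprime x (2 ^ n * m * g) := by
  refine .mul_right (.mul_right (.pow_right (Int.isCoprime_two_right.2 hx)) ?_) ?_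
  · exact .of_isCoprime_of_dvd_left (IsCoprime.mul_sub_left_left_iff.2 hmg.symm) hdvd
  · refine .of_isCoprime_of_dvd_left ?_ hdvd
    simpa using (IsCoprime.sub_mul_left_left_iff (z := 1)).2 (hmg.mul_left hug)

/-! ### Ternary forms -/

/-- The integral ternary quadratic form `a x² + b y² + c z² + p yz + q xz + r xy`. -/
@[ext]
structure TernaryForm where
  (a b c p q r : ℤ)

namespace TernaryForm

/-- The value of a ternary form at an integral vector. -/
def eval (F : TernaryForm) (v : Fin 3 → ℤ) : ℤ :=
  F.a * v 0 ^ 2 + F.b * v 1 ^ 2 + F.c * v 2 ^ 2 +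
    F.p * (v 1 * v 2) + F.q * (v 0 * v 2) + F.r * (v 0 * v 1)

/-- The form `F` represents the integer `n`. -/
def Represents (F : TernaryForm) (n : ℤ) : Prop := ∃ v, F.eval v = n

/-- Half the determinant of the Hessian matrix of `F`. -/
def halfDisc (F : TernaryForm) : ℤ :=
  4 * F.a * F.b * F.c + F.p * F.q * F.r - F.a * F.p ^ 2 - F.b * F.q ^ 2 - F.c * F.r ^ 2

/-- With `mixed` and `coMinor`, the coefficients of the binary form left after completing the square
in `x`: `4a F = (2ax + ry + qz)² + (minor y² + 2 mixed yz + coMinor z²)`. -/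
def minor (F : TernaryForm) : ℤ := 4 * F.a * F.b - F.r ^ 2

/-- See `TernaryForm.minor`. -/
def mixed (F : TernaryForm) : ℤ := 2 * F.a * F.p - F.q * F.r

/-- See `TernaryForm.minor`. -/
def coMinor (F : TernaryForm) : ℤ := 4 * F.a * F.c - F.q ^ 2

/-- Positive definiteness, through the leading principal minors. -/
structure PosDef (F : TernaryForm) : Prop where
  a_pos : 0 < F.a
  minor_pos : 0 < F.minor
  halfDisc_pos : 0 < F.halfDisc

/-- The pullback `v ↦ F (M v)`. -/
def comp (F : TernaryForm) (M : Matrix (Fin 3) (Fin 3) ℤ) : TernaryForm where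
  a := F.eval (M.col 0)
  b := F.eval (M.col 1)
  c := F.eval (M.col 2)
  p := QuadraticMap.polar F.eval (M.col 1) (M.col 2)
  q := QuadraticMap.polar F.eval (M.col 0) (M.col 2)
  r := QuadraticMap.polar F.eval (M.col 0) (M.col 1)

/-- Representation of a form by a form: `F` is a pullback of `G`. -/
def RepresentedBy (F G : TernaryForm) : Prop := ∃ M, F = G.comp M

variable {F G H : TernaryForm}

theorem minor_mul_coMinor_sub (F : TernaryForm) :
    F.minor * F.coMinor - F.mixed ^ 2 = 4 * F.a * F.halfDisc := by
  simp only [minor, coMinor, mixed, halfDisc]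
  ring

theorem polar_eval (F : TernaryForm) (u v : Fin 3 → ℤ) :
    QuadraticMap.polar F.eval u v =
      2 * F.a * (u 0 * v 0) + 2 * F.b * (u 1 * v 1) + 2 * F.c * (u 2 * v 2) +
        F.p * (u 1 * v 2 + u 2 * v 1) + F.q * (u 0 * v 2 + u 2 * v 0) +
        F.r * (u 0 * v 1 + u 1 * v 0) := by
  simp only [QuadraticMap.polar, eval, Pi.add_apply]
  ring

theorem eval_comp (F : TernaryForm) (M : Matrix (Fin 3) (Fin 3) ℤ) (v : Fin 3 → ℤ) :
    (F.comp M).eval v = F.eval (M *ᵥ v) := by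
  simp only [comp, polar_eval]
  simp only [eval, Matrix.col_apply, Matrix.mulVec, dotProduct, Fin.sum_univ_three]
  ring

theorem eval_injective : Function.Injective eval := by
  intro F G h
  have eval_eq (v : Fin 3 → ℤ) : F.eval v = G.eval v := congrFun h v
  have h1 := eval_eq ![1, 0, 0]
  have h2 := eval_eq ![0, 1, 0]
  have h3 := eval_eq ![0, 0, 1]
  have h4 := eval_eq ![0, 1, 1]
  have h5 := eval_eq ![1, 0, 1]
  have h6 := eval_eq ![1, 1, 0]
  simp only [eval, Matrix.cons_val] at h1 h2 h3 h4 h5 h6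
  ext <;> linarith

theorem comp_comp (F : TernaryForm) (M N : Matrix (Fin 3) (Fin 3) ℤ) :
    (F.comp M).comp N = F.comp (M * N) :=
  eval_injective <| funext fun v => by simp only [eval_comp, Matrix.mulVec_mulVec]

theorem comp_one (F : TernaryForm) : F.comp 1 = F :=
  eval_injective <| funext fun v => by rw [eval_comp, Matrix.one_mulVec]

theorem halfDisc_comp (F : TernaryForm) (M : Matrix (Fin 3) (Fin 3) ℤ) :
    (F.comp M).halfDisc = M.det ^ 2 * F.halfDisc := by
  simp only [halfDisc, comp, polar_eval]
  simp only [eval, Matrix.col_apply, Matrix.det_fin_three]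
  ring

theorem representedBy_comp (F : TernaryForm) {M N : Matrix (Fin 3) (Fin 3) ℤ} (h : M * N = 1) :
    F.RepresentedBy (F.comp M) :=
  ⟨N, by rw [comp_comp, h, comp_one]⟩

theorem RepresentedBy.trans (hFG : F.RepresentedBy G) (hGH : G.RepresentedBy H) :
    F.RepresentedBy H := by
  obtain ⟨M, rfl⟩ := hFG
  obtain ⟨N, rfl⟩ := hGH
  exact ⟨N * M, comp_comp _ _ _⟩

theorem Represents.of_representedBy {n : ℤ} (h : F.Represents n) (hFG : F.RepresentedBy G) :
    G.Represents n := by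
  obtain ⟨M, rfl⟩ := hFG
  obtain ⟨v, hv⟩ := h
  exact ⟨M *ᵥ v, by rw [← eval_comp, hv]⟩

theorem represents_c (F : TernaryForm) : F.Represents F.c :=
  ⟨![0, 0, 1], by simp [eval]⟩

/-! ### Hermite reduction -/

theorem exists_shear (F : TernaryForm) (t : ℤ) :
    ∃ G, F.RepresentedBy G ∧ G.a = F.a ∧ G.minor = F.minor ∧ G.mixed = F.mixed + F.minor * t ∧
      G.halfDisc = F.halfDisc := by
  refine ⟨F.comp !![1, 0, 0; 0, 1, t; 0, 0, 1],
    F.representedBy_comp (N := !![1, 0, 0; 0, 1, -t; 0, 0, 1]) (by simp [Matrix.one_fin_three]),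
    ?_, ?_, ?_, by simp [halfDisc_comp, Matrix.det_fin_three]⟩
  all_goals
    simp only [minor, mixed, comp, eval, polar_eval, Matrix.col_apply, Matrix.of_apply,
      Matrix.cons_val]
    ring

theorem exists_rotate (F : TernaryForm) :
    ∃ G, F.RepresentedBy G ∧ G.a = F.a ∧ G.minor = F.coMinor ∧ G.halfDisc = F.halfDisc := by
  refine ⟨F.comp !![1, 0, 0; 0, 0, -1; 0, 1, 0],
    F.representedBy_comp (N := !![1, 0, 0; 0, 0, 1; 0, -1, 0]) (by simp [Matrix.one_fin_three]),
    ?_, ?_, by simp [halfDisc_comp, Matrix.det_fin_three]⟩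
  all_goals
    simp only [minor, coMinor, comp, eval, polar_eval, Matrix.col_apply, Matrix.of_apply,
      Matrix.cons_val]
    ring

theorem exists_shift (F : TernaryForm) (t s : ℤ) :
    ∃ G, F.RepresentedBy G ∧ G.a = F.a ∧ G.r = F.r + 2 * F.a * t ∧ G.q = F.q + 2 * F.a * s ∧
      G.minor = F.minor ∧ G.mixed = F.mixed ∧ G.coMinor = F.coMinor ∧
      G.halfDisc = F.halfDisc := by
  refine ⟨F.comp !![1, t, s; 0, 1, 0; 0, 0, 1],
    F.representedBy_comp (N := !![1, -t, -s; 0, 1, 0; 0, 0, 1]) (by simp [Matrix.one_fin_three]),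
    ?_, ?_, ?_, ?_, ?_, ?_, by simp [halfDisc_comp, Matrix.det_fin_three]⟩
  all_goals
    simp only [minor, mixed, coMinor, comp, eval, polar_eval, Matrix.col_apply, Matrix.of_apply,
      Matrix.cons_val]
    ring

theorem exists_swap (F : TernaryForm) :
    ∃ G, F.RepresentedBy G ∧ G.a = F.b ∧ G.minor = F.minor ∧ G.halfDisc = F.halfDisc := by
  refine ⟨F.comp !![0, 1, 0; 1, 0, 0; 0, 0, 1],
    F.representedBy_comp (N := !![0, 1, 0; 1, 0, 0; 0, 0, 1]) (by simp [Matrix.one_fin_three]),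
    ?_, ?_, by simp [halfDisc_comp, Matrix.det_fin_three]⟩
  all_goals
    simp only [minor, comp, eval, polar_eval, Matrix.col_apply, Matrix.of_apply, Matrix.cons_val]
    ring

theorem PosDef.coMinor_pos (hF : F.PosDef) : 0 < F.coMinor := by
  have hdisc : 0 < 4 * F.a * F.halfDisc := by
    have := hF.a_pos
    have := hF.halfDisc_pos
    positivity
  refine pos_of_mul_pos_right (a := F.minor) ?_ hF.minor_pos.le
  linarith [F.minor_mul_coMinor_sub, sq_nonneg F.mixed]

theorem PosDef.b_pos (hF : F.PosDef) : 0 < F.b := by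
  have hminor := hF.minor_pos
  rw [minor] at hminor
  refine pos_of_mul_pos_right (a := 4 * F.a) ?_ (by linarith [hF.a_pos])
  linarith [sq_nonneg F.r]

theorem PosDef.exists_gauss_reduced (hF : F.PosDef) :
    ∃ G, F.RepresentedBy G ∧ G.PosDef ∧ G.halfDisc = F.halfDisc ∧
      2 * |G.mixed| ≤ G.minor ∧ G.minor ≤ G.coMinor ∧ G.a = F.a := by
  induction hn : F.minor.toNat using Nat.strong_induction_on generalizing F with
  | _ n ih =>
  subst hn
  obtain ⟨t, ht⟩ := exists_two_mul_abs_add_mul_le hF.minor_pos F.mixed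
  obtain ⟨G, hFG, ha, hminor, hmixed, hdisc⟩ := F.exists_shear t
  have hG : G.PosDef := ⟨ha ▸ hF.a_pos, hminor ▸ hF.minor_pos, hdisc ▸ hF.halfDisc_pos⟩
  by_cases hle : G.minor ≤ G.coMinor
  · exact ⟨G, hFG, hG, hdisc, by rwa [hmixed, hminor], hle, ha⟩
  obtain ⟨H, hGH, haH, hminorH, hdiscH⟩ := G.exists_rotate
  have hH : H.PosDef := ⟨haH ▸ hG.a_pos, hminorH ▸ hG.coMinor_pos, hdiscH ▸ hG.halfDisc_pos⟩
  obtain ⟨K, hHK, hK, hdiscK, hmixedK, hleK, haK⟩ :=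
    ih H.minor.toNat (by have := hF.minor_pos; omega) hH rfl
  exact ⟨K, hFG.trans (hGH.trans hHK), hK, by rw [hdiscK, hdiscH, hdisc], hmixedK, hleK,
    by rw [haK, haH, ha]⟩

/-- A reduced form: the binary form of `minor`, `mixed`, `coMinor` is Gauss reduced, shifts of `x`
have been used to make `q` and `r` small, and `a ≤ b`. -/
structure IsReduced (F : TernaryForm) : Prop where
  mixed_le : 2 * |F.mixed| ≤ F.minor
  minor_le : F.minor ≤ F.coMinor
  r_le : |F.r| ≤ F.a
  q_le : |F.q| ≤ F.a
  a_le : F.a ≤ F.b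

theorem PosDef.exists_isReduced (hF : F.PosDef) :
    ∃ G, F.RepresentedBy G ∧ G.PosDef ∧ G.halfDisc = F.halfDisc ∧ G.IsReduced := by
  induction hn : F.a.toNat using Nat.strong_induction_on generalizing F with
  | _ n ih =>
  subst hn
  obtain ⟨G, hFG, hG, hdiscG, hmixed, hminor, ha⟩ := hF.exists_gauss_reduced
  have ha2 : 0 < 2 * G.a := by linarith [hG.a_pos]
  obtain ⟨t, ht⟩ := exists_two_mul_abs_add_mul_le ha2 G.r
  obtain ⟨s, hs⟩ := exists_two_mul_abs_add_mul_le ha2 G.q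
  obtain ⟨H, hGH, haH, hr, hq, hminorH, hmixedH, hcoMinorH, hdiscH⟩ := G.exists_shift t s
  have hH : H.PosDef := ⟨haH ▸ hG.a_pos, hminorH ▸ hG.minor_pos, hdiscH ▸ hG.halfDisc_pos⟩
  by_cases hab : H.a ≤ H.b
  · exact ⟨H, hFG.trans hGH, hH, hdiscH.trans hdiscG, by rwa [hmixedH, hminorH],
      by rwa [hminorH, hcoMinorH], by rw [hr, haH]; linarith, by rw [hq, haH]; linarith, hab⟩
  obtain ⟨K, hHK, haK, hminorK, hdiscK⟩ := H.exists_swap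
  have hK : K.PosDef := ⟨haK ▸ hH.b_pos, hminorK ▸ hH.minor_pos, hdiscK ▸ hH.halfDisc_pos⟩
  obtain ⟨L, hKL, hL, hdiscL, hred⟩ := ih K.a.toNat (by have := hH.b_pos; omega) hK rfl
  exact ⟨L, hFG.trans (hGH.trans (hHK.trans hKL)), hL,
    by rw [hdiscL, hdiscK, hdiscH, hdiscG], hred⟩

theorem IsReduced.three_mul_a_sq_le (hred : F.IsReduced) : 3 * F.a ^ 2 ≤ F.minor := by
  have hr2 : F.r ^ 2 ≤ F.a ^ 2 := sq_le_sq.2 (hred.r_le.trans (le_abs_self _))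
  have ha : 0 ≤ F.a := (abs_nonneg _).trans hred.r_le
  rw [minor]
  nlinarith [mul_le_mul_of_nonneg_left hred.a_le ha]

theorem IsReduced.two_mul_mixed_mem_Icc (hred : F.IsReduced) :
    2 * F.mixed ∈ Set.Icc (-F.minor) F.minor := by
  have hle := hred.mixed_le
  exact ⟨by linarith [neg_abs_le F.mixed], by linarith [le_abs_self F.mixed]⟩

theorem IsReduced.three_mul_minor_sq_le (hred : F.IsReduced) :
    3 * F.minor ^ 2 ≤ 16 * F.a * F.halfDisc := by
  have hminor : 0 ≤ F.minor := by linarith [hred.mixed_le, abs_nonneg F.mixed]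
  obtain ⟨hlow, hhigh⟩ := hred.two_mul_mixed_mem_Icc
  nlinarith [F.minor_mul_coMinor_sub, mul_le_mul_of_nonneg_left hred.minor_le hminor,
    sq_le_sq' hlow hhigh]

theorem IsReduced.a_cube_le (hF : F.PosDef) (hred : F.IsReduced) :
    27 * F.a ^ 3 ≤ 16 * F.halfDisc := by
  have ha := hF.a_pos
  refine le_of_mul_le_mul_left ?_ ha
  calc F.a * (27 * F.a ^ 3) = 3 * (3 * F.a ^ 2) ^ 2 := by ring
    _ ≤ 3 * F.minor ^ 2 := by gcongr; exact hred.three_mul_a_sq_le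
    _ ≤ 16 * F.a * F.halfDisc := hred.three_mul_minor_sq_le
    _ = F.a * (16 * F.halfDisc) := by ring

theorem IsReduced.a_eq_one (hF : F.PosDef) (hred : F.IsReduced) (hdisc : F.halfDisc ≤ 6) :
    F.a = 1 := by
  have ha := hF.a_pos
  by_contra hne
  have : 2 ^ 3 ≤ F.a ^ 3 := by gcongr; omega
  linarith [hred.a_cube_le hF]

theorem IsReduced.b_eq_one (hF : F.PosDef) (hred : F.IsReduced) (hdisc : F.halfDisc ≤ 6) :
    F.b = 1 := by
  have ha := hred.a_eq_one hF hdisc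
  have hr := sq_le_sq.2 (hred.r_le.trans (le_abs_self _))
  have hbound := hred.three_mul_minor_sq_le
  simp only [minor, ha] at hr hbound
  nlinarith [hred.a_le]

theorem IsReduced.exists_eq (hF : F.PosDef) (hred : F.IsReduced) (hdisc : F.halfDisc ≤ 6) :
    ∃ c, ∃ p ∈ Set.Icc (-1) 1, ∃ q ∈ Set.Icc (-1) 1, ∃ r ∈ Set.Icc (-1) 1,
      F = ⟨1, 1, c, p, q, r⟩ := by
  have ha := hred.a_eq_one hF hdisc
  have hb := hred.b_eq_one hF hdisc
  have hq := abs_le.1 (ha ▸ hred.q_le)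
  have hr := abs_le.1 (ha ▸ hred.r_le)
  have hmixed : |F.mixed| ≤ 2 := by
    have hminor : F.minor ≤ 4 := by
      rw [minor, ha, hb]
      linarith [sq_nonneg F.r]
    linarith [hred.mixed_le]
  have hqr : |F.q * F.r| ≤ 1 := by
    rw [abs_mul]
    exact mul_le_one₀ (abs_le.2 hq) (abs_nonneg _) (abs_le.2 hr)
  rw [mixed, ha] at hmixed
  rw [abs_le] at hmixed hqr
  exact ⟨F.c, F.p, ⟨by omega, by omega⟩, F.q, hq, F.r, hr, by ext <;> first | assumption | rfl⟩

/-! ### Forms of half-discriminant 2, 3 and 6 -/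

/-- The form `a x² + (y² + yz + z²)`. -/
def loeschianForm (a : ℤ) : TernaryForm := ⟨a, 1, 1, 1, 0, 0⟩

/-- The form `x² + y² + z² + yz + xz + xy` of the root lattice `A₃`. -/
def formA₃ : TernaryForm := ⟨1, 1, 1, 1, 1, 1⟩

/-- The form `x² + y² + 2z² + yz + xz`, which has the same `halfDisc` as `loeschianForm 2` without
being equivalent to it. -/
def loeschianMate : TernaryForm := ⟨1, 1, 2, 1, 1, 0⟩

theorem IsReduced.representedBy_formA₃ (hF : F.PosDef) (hred : F.IsReduced)
    (hdisc : F.halfDisc = 2) : F.RepresentedBy formA₃ := by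
  obtain ⟨c, p, ⟨_, _⟩, q, ⟨_, _⟩, r, ⟨_, _⟩, rfl⟩ := hred.exists_eq hF (by omega)
  obtain ⟨hc, hq2, hr2, hp0⟩ : c = 1 ∧ q ^ 2 = 1 ∧ r ^ 2 = 1 ∧ (p = q * r ∨ p = 0) := by
    have hmixed := hred.two_mul_mixed_mem_Icc
    have hminor := hred.minor_le
    simp only [halfDisc, minor, mixed, coMinor, Set.mem_Icc] at hdisc hmixed hminor
    interval_cases p <;> interval_cases q <;> interval_cases r <;> omega
  subst hc
  rcases hp0 with rfl | rfl
  · refine ⟨!![1, 0, 0; 0, r, 0; 0, 0, q], ?_⟩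
    ext <;> simp [comp, eval, polar_eval, formA₃] <;> linarith
  · refine ⟨!![1, 0, q; 0, r, 0; 0, 0, -q], ?_⟩
    ext <;> simp [comp, eval, polar_eval, formA₃] <;> linarith

theorem IsReduced.representedBy_loeschianForm_one (hF : F.PosDef) (hred : F.IsReduced)
    (hdisc : F.halfDisc = 3) : F.RepresentedBy (loeschianForm 1) := by
  obtain ⟨c, p, ⟨_, _⟩, q, ⟨_, _⟩, r, ⟨_, _⟩, rfl⟩ := hred.exists_eq hF (by omega)
  obtain ⟨hc, hq, hpr⟩ : c = 1 ∧ q = 0 ∧ (p = 0 ∧ r ^ 2 = 1 ∨ p ^ 2 = 1 ∧ r = 0) := by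
    have hmixed := hred.two_mul_mixed_mem_Icc
    have hminor := hred.minor_le
    simp only [halfDisc, minor, mixed, coMinor, Set.mem_Icc] at hdisc hmixed hminor
    interval_cases p <;> interval_cases q <;> interval_cases r <;> omega
  subst hc hq
  rcases hpr with ⟨rfl, hr2⟩ | ⟨hp2, rfl⟩
  · refine ⟨!![0, 0, 1; 1, 0, 0; 0, r, 0], ?_⟩
    ext <;> simp [comp, eval, polar_eval, loeschianForm, hr2]
  · refine ⟨!![1, 0, 0; 0, 1, 0; 0, 0, p], ?_⟩
    ext <;> simp [comp, eval, polar_eval, loeschianForm, hp2]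

theorem IsReduced.representedBy_loeschianForm_two_or (hF : F.PosDef) (hred : F.IsReduced)
    (hdisc : F.halfDisc = 6) :
    F.RepresentedBy (loeschianForm 2) ∨ F.RepresentedBy loeschianMate := by
  obtain ⟨c, p, ⟨_, _⟩, q, ⟨_, _⟩, r, ⟨_, _⟩, rfl⟩ := hred.exists_eq hF (by omega)
  obtain ⟨hc, hpqr⟩ : c = 2 ∧
      (p = 0 ∧ q = 0 ∧ r ^ 2 = 1 ∨ p ^ 2 = 1 ∧ q ^ 2 = 1 ∧ r = 0) := by
    have hmixed := hred.two_mul_mixed_mem_Icc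
    have hminor := hred.minor_le
    simp only [halfDisc, minor, mixed, coMinor, Set.mem_Icc] at hdisc hmixed hminor
    interval_cases p <;> interval_cases q <;> interval_cases r <;> omega
  subst hc
  rcases hpqr with ⟨rfl, rfl, hr2⟩ | ⟨hp2, hq2, rfl⟩
  · refine .inl ⟨!![0, 0, 1; 1, 0, 0; 0, r, 0], ?_⟩
    ext <;> simp [comp, eval, polar_eval, loeschianForm, hr2]
  · refine .inr ⟨!![q, 0, 0; 0, p, 0; 0, 0, 1], ?_⟩
    ext <;> simp [comp, eval, polar_eval, loeschianMate, hp2, hq2]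

theorem PosDef.representedBy_formA₃ (hF : F.PosDef) (hdisc : F.halfDisc = 2) :
    F.RepresentedBy formA₃ := by
  obtain ⟨G, hFG, hG, hdiscG, hred⟩ := hF.exists_isReduced
  exact hFG.trans (hred.representedBy_formA₃ hG (hdiscG.trans hdisc))

theorem PosDef.representedBy_loeschianForm_one (hF : F.PosDef) (hdisc : F.halfDisc = 3) :
    F.RepresentedBy (loeschianForm 1) := by
  obtain ⟨G, hFG, hG, hdiscG, hred⟩ := hF.exists_isReduced
  exact hFG.trans (hred.representedBy_loeschianForm_one hG (hdiscG.trans hdisc))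

theorem minor_comp_loeschianMate_emod_three (M : Matrix (Fin 3) (Fin 3) ℤ) :
    (loeschianMate.comp M).minor % 3 ≠ 2 := by
  set u := M.col 0
  set v := M.col 1
  -- The minor is a quadratic form in the cross product of the first two columns of `M`.
  set X := u 1 * v 2 - u 2 * v 1
  set Y := u 2 * v 0 - u 0 * v 2
  set Z := u 0 * v 1 - u 1 * v 0
  have hminor : (loeschianMate.comp M).minor = (X + Y + Z) ^ 2 +
      3 * (2 * X ^ 2 + 2 * Y ^ 2 + Z ^ 2 - 2 * X * Z - 2 * Y * Z) := by
    simp only [minor, comp, polar_eval, loeschianMate, X, Y, Z, u, v]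
    simp only [eval]
    ring
  rw [hminor, Int.add_mul_emod_self_left]
  generalize X + Y + Z = s
  rw [sq, Int.mul_emod]
  obtain h | h | h : s % 3 = 0 ∨ s % 3 = 1 ∨ s % 3 = 2 := by omega
  all_goals simp [h]

theorem PosDef.representedBy_loeschianForm_two (hF : F.PosDef) (hdisc : F.halfDisc = 6)
    (hminor : F.minor % 3 = 2) : F.RepresentedBy (loeschianForm 2) := by
  obtain ⟨G, hFG, hG, hdiscG, hred⟩ := hF.exists_isReduced
  obtain hL | hmate := hred.representedBy_loeschianForm_two_or hG (hdiscG.trans hdisc)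
  · exact hFG.trans hL
  · obtain ⟨M, rfl⟩ := hFG.trans hmate
    exact absurd hminor (minor_comp_loeschianMate_emod_three M)

theorem loeschianForm_represents_iff {a n : ℤ} :
    (loeschianForm a).Represents n ↔ ∃ x z w, n = a * x ^ 2 + (z ^ 2 + z * w + w ^ 2) := by
  constructor
  · rintro ⟨v, rfl⟩
    exact ⟨v 0, v 1, v 2, by simp only [eval, loeschianForm]; ring⟩
  · rintro ⟨x, z, w, rfl⟩
    exact ⟨![x, z, w], by simp only [eval, loeschianForm, Matrix.cons_val]; ring⟩

theorem loeschianForm_two_represents_three_mul {m : ℤ} (h : formA₃.Represents m) :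
    (loeschianForm 2).Represents (3 * m) := by
  obtain ⟨v, rfl⟩ := h
  refine loeschianForm_represents_iff.2 ⟨v 0 + v 1 + v 2, v 0 - v 1, v 1 - v 2, ?_⟩
  simp only [eval, formA₃]
  ring

/-! ### Forms with a prescribed diagonal entry -/

theorem exists_halfDisc_eq_of_dvd {b m q r D Δ : ℤ} (hb : 0 < b) (hD : 0 < D) (hΔ : 0 < Δ)
    (hdvd : 4 * b ∣ r ^ 2 + D) (hdisc : m * D - b * q ^ 2 = Δ) :
    ∃ F : TernaryForm, F.PosDef ∧ F.halfDisc = Δ ∧ F.minor = D ∧ F.c = m := by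
  obtain ⟨a, ha⟩ := hdvd
  have hminor : minor ⟨a, b, m, 0, q, r⟩ = D := by
    simp only [minor]
    linear_combination -ha
  have hhalfDisc : halfDisc ⟨a, b, m, 0, q, r⟩ = Δ := by
    simp only [halfDisc]
    linear_combination hdisc - m * ha
  have ha0 : 0 < a := pos_of_mul_pos_right (by linarith [sq_nonneg r]) (by linarith : 0 ≤ 4 * b)
  exact ⟨⟨a, b, m, 0, q, r⟩, ⟨ha0, by rwa [hminor], by rwa [hhalfDisc]⟩, hhalfDisc, hminor, rfl⟩

theorem exists_halfDisc_eq_c_eq {g : ℕ} {m : ℤ} (hg : g % 4 = 3) (hm : 0 < m)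
    (hmg : IsCoprime m g) : ∃ F : TernaryForm, F.PosDef ∧ F.halfDisc = g ∧ F.c = m := by
  have hg0 : 0 < g := by omega
  have hcop : IsCoprime (4 * m - g) (2 ^ 3 * m * g) := by
    refine isCoprime_two_pow_mul_mul (u := 2 ^ 2) 3 ?_ hmg ?_ ⟨1, by ring⟩
    · exact Int.odd_iff.2 (by omega)
    · exact .pow_left (Int.isCoprime_two_left.2 (Int.odd_iff.2 (by omega)))
  obtain ⟨j, p, hp, hpj⟩ := exists_prime_eq_mul_add_s7 (by positivity) hcop
  obtain ⟨k, hk⟩ : ∃ k, k = 2 * (g * j) + 1 := ⟨_, rfl⟩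
  have hkp : 4 * (m * k) - g = p := by rw [hpj, hk]; push_cast; ring
  have hp4 : p % 4 = 1 := by omega
  have hkg : (g : ℤ) ∣ k - 1 := ⟨2 * j, by rw [hk]; push_cast; ring⟩
  obtain ⟨s, -, t, hst⟩ := exists_odd_dvd_sq_add hp (Nat.odd_iff.2 (by omega)) <|
    jacobiSym_neg_eq_one_of_four_mul hg (Nat.odd_iff.2 (by omega)) hkg hp4 hkp
  obtain ⟨F, hF, hdisc, -, hc⟩ := exists_halfDisc_eq_of_dvd (b := p) (m := m) (q := 1) (r := 2 * s)
    (D := 4 * k) (Δ := g) (by exact_mod_cast hp.pos) (by omega) (by omega)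
    ⟨t, by linear_combination 4 * hst⟩ (by linear_combination hkp)
  exact ⟨F, hF, hdisc, hc⟩

theorem exists_halfDisc_eq_two_mul_c_eq {g : ℕ} {m : ℤ} (hg : Odd g) (hm : 0 < m)
    (hmodd : Odd m) (hmg : IsCoprime m g) :
    ∃ F : TernaryForm, F.PosDef ∧ F.halfDisc = 2 * g ∧ F.c = m ∧ (g : ℤ) ∣ F.minor + 4 := by
  have hg0 := hg.pos
  have hg2 := Nat.odd_iff.1 hg
  have hcop : IsCoprime (2 * (m * (2 * g - 1)) - g : ℤ) (2 ^ 3 * m * g) := by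
    refine isCoprime_two_pow_mul_mul (u := 2 * (2 * g - 1)) 3 ?_ hmg ?_ ⟨1, by ring⟩
    · exact Int.odd_iff.2 (by omega)
    · exact .mul_left (Int.isCoprime_two_left.2 (by exact_mod_cast hg)) ⟨-1, 2, by ring⟩
  obtain ⟨j, p, hp, hpj⟩ := exists_prime_eq_mul_add_s7 (by positivity) hcop
  obtain ⟨k, hk⟩ : ∃ k : ℕ, k = 4 * (g * j) + 2 * g - 1 := ⟨_, rfl⟩
  have hkz : (k : ℤ) = 4 * (g * j) + 2 * g - 1 := by push_cast [hk]; omega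
  have hkp : 2 * (m * k) - g = p := by rw [hpj, hkz]; ring
  have hk4 : k % 4 = 1 := by omega
  have hp4 : p % 4 = g % 4 := by
    have hkodd : Odd (k : ℤ) := by exact_mod_cast Nat.odd_iff.2 (by omega)
    have hmk := Int.odd_iff.1 (hmodd.mul hkodd)
    omega
  have hkg : (g : ℤ) ∣ k + 1 := ⟨4 * j + 2, by rw [hkz]; ring⟩
  obtain ⟨s, hsodd, hs⟩ := exists_odd_dvd_sq_add hp (Nat.odd_iff.2 (by omega)) <|
    jacobiSym_neg_eq_one_of_two_mul hg hk4 hkg hp4 hkp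
  obtain ⟨t, hst⟩ : 2 * (p : ℤ) ∣ s ^ 2 + k := by
    refine IsCoprime.mul_dvd (Int.isCoprime_two_left.2 (Int.odd_iff.2 (by omega))) ?_ hs
    exact (hsodd.pow.add_odd (Int.odd_iff.2 (by omega))).two_dvd
  obtain ⟨F, hF, hdisc, hminor, hc⟩ := exists_halfDisc_eq_of_dvd (b := 2 * p) (m := m) (q := 1)
    (r := 2 * s) (D := 4 * k) (Δ := 2 * g) (by have := hp.pos; positivity) (by omega) (by omega)
    ⟨t, by linear_combination 4 * hst⟩ (by linear_combination 2 * hkp)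
  exact ⟨F, hF, hdisc, hc, by rw [hminor, ← mul_add_one]; exact hkg.mul_left 4⟩

theorem exists_halfDisc_eq_two_mul_c_eq_two_mul_of_eq {g D₀ e : ℕ} {m B : ℤ} (hg : Odd g)
    (hm : 0 < m) (hmg : IsCoprime m g) (hD₀ : D₀ % 8 = 3) (hgD₀ : (g : ℤ) ∣ D₀ + 1)
    (he : IsCoprime (e : ℤ) D₀) (hB : Odd B) (h : m * D₀ - g = 2 * e ^ 2 * B) :
    ∃ F : TernaryForm, F.PosDef ∧ F.halfDisc = 2 * g ∧ F.c = 2 * m ∧ (g : ℤ) ∣ F.minor + 1 := by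
  have hg0 := hg.pos
  obtain ⟨t, ht⟩ := hgD₀
  have hcop : IsCoprime B (2 ^ 2 * m * g) :=
    isCoprime_two_pow_mul_mul (u := D₀) 2 hB hmg ⟨-1, t, by linear_combination -ht⟩
      ⟨2 * e ^ 2, by linear_combination h⟩
  obtain ⟨j, p, hp, hpj⟩ := exists_prime_eq_mul_add_s7 (by positivity) hcop
  have hpodd : Odd p := by
    rw [← Int.odd_coe_nat, hpj]
    exact Even.add_odd ⟨2 * m * g * j, by ring⟩ hB
  -- This shift of `D₀` moves `(m D₀ - g) / (2 e²) = B` to the prime `4 m g j + B`.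
  obtain ⟨D, hD⟩ : ∃ D, D = D₀ + 8 * (e ^ 2 * (g * j)) := ⟨_, rfl⟩
  have hDp : m * D - g = 2 * e ^ 2 * p := by rw [hpj, hD]; push_cast; linear_combination h
  have hgD : (g : ℤ) ∣ D + 1 := ⟨t + 8 * e ^ 2 * j, by rw [hD]; push_cast; linear_combination ht⟩
  have heD : IsCoprime (e : ℤ) D := by
    rw [show (D : ℤ) = D₀ + e * (8 * e * g * j) by rw [hD]; push_cast; ring]
    exact IsCoprime.add_mul_left_right_iff.2 he
  obtain ⟨r, hrodd, hr⟩ := exists_odd_dvd_sq_add hp hpodd <|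
    jacobiSym_neg_eq_one_of_two_mul_sq hg (by omega) hgD hpodd heD hDp
  have hr4 : 4 * (p : ℤ) ∣ r ^ 2 + D := by
    have hp4 : IsCoprime (2 ^ 2 : ℤ) p :=
      .pow_left (Int.isCoprime_two_left.2 (by exact_mod_cast hpodd))
    refine hp4.mul_dvd ?_ hr
    have := Int.sq_mod_four_eq_one_of_odd hrodd
    omega
  obtain ⟨F, hF, hdisc, hminor, hc⟩ := exists_halfDisc_eq_of_dvd (b := p) (m := 2 * m) (q := 2 * e)
    (r := r) (D := D) (Δ := 2 * g) (by exact_mod_cast hp.pos) (by omega) (by omega) hr4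
    (by linear_combination 2 * hDp)
  exact ⟨F, hF, hdisc, hc, by rwa [hminor]⟩

theorem exists_halfDisc_eq_two_mul_c_eq_two_mul {g : ℕ} {m : ℤ} (hg : Odd g)
    (hm : 0 < m) (hmodd : Odd m) (hmg : IsCoprime m g) (h8 : ¬ 8 ∣ m + g) :
    ∃ F : TernaryForm, F.PosDef ∧ F.halfDisc = 2 * g ∧ F.c = 2 * m ∧ (g : ℤ) ∣ F.minor + 1 := by
  have hg2 := Nat.odd_iff.1 hg
  have hm2 := Int.odd_iff.1 hmodd
  obtain ⟨t, ht⟩ : Odd (m * g) := hmodd.mul (by exact_mod_cast hg)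
  have hD₀ {i : ℕ} (hi : 0 < i) : ((i * g - 1 : ℕ) : ℤ) = i * g - 1 := by
    push_cast [Nat.one_le_iff_ne_zero.2 (mul_pos hi hg.pos).ne']
    rfl
  by_cases h4 : 4 ∣ m + g
  · obtain ⟨v, hv⟩ : ∃ v, m + g = 8 * v + 4 := ⟨(m + g) / 8, by omega⟩
    obtain ⟨i, hi, B, hB, hiB⟩ : ∃ i : ℕ, (i = 4 ∨ i = 12) ∧ ∃ B : ℤ, Odd B ∧
        i * (m * g) - (m + g) = 8 * B := by
      rcases Int.even_or_odd (t - v) with heven | hodd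
      · exact ⟨12, .inr rfl, t - v + (2 * t + 1), heven.add_odd ⟨t, rfl⟩, by push_cast; omega⟩
      · exact ⟨4, .inl rfl, t - v, hodd, by push_cast; omega⟩
    refine exists_halfDisc_eq_two_mul_c_eq_two_mul_of_eq (D₀ := i * g - 1) (e := 2) (B := B) hg hm
      hmg ?_ ?_ ?_ hB ?_
    · rcases hi with rfl | rfl <;> omega
    · exact ⟨i, by rw [hD₀ (by omega)]; ring⟩
    · refine Int.isCoprime_two_left.2 (Int.odd_iff.2 ?_)
      rcases hi with rfl | rfl <;> omega
    · rw [hD₀ (by omega)]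
      push_cast
      linear_combination hiB
  · obtain ⟨v, hv⟩ : ∃ v, m + g = 4 * v + 2 := ⟨(m + g) / 4, by omega⟩
    refine exists_halfDisc_eq_two_mul_c_eq_two_mul_of_eq (D₀ := 4 * g - 1) (e := 1)
      (B := 2 * (m * g - v - 1) + 1) hg hm hmg (by omega) ?_ isCoprime_one_left ⟨_, rfl⟩ ?_
    · exact ⟨4, by rw [hD₀ four_pos]; push_cast; ring⟩
    · rw [hD₀ four_pos]
      push_cast
      linear_combination -hv

theorem isCoprime_three_right {m : ℤ} (h : m % 3 ≠ 0) : IsCoprime m 3 :=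
  ((Int.prime_three.coprime_iff_not_dvd).2 (by omega)).symm

theorem loeschianForm_one_represents {m : ℤ} (hm : 0 < m) (h3 : m % 3 ≠ 0) :
    (loeschianForm 1).Represents m := by
  obtain ⟨F, hF, hdisc, rfl⟩ :=
    exists_halfDisc_eq_c_eq (g := 3) rfl hm (isCoprime_three_right h3)
  exact F.represents_c.of_representedBy (hF.representedBy_loeschianForm_one hdisc)

theorem formA₃_represents_of_odd {m : ℤ} (hm : 0 < m) (hodd : Odd m) : formA₃.Represents m := by
  obtain ⟨F, hF, hdisc, rfl, -⟩ :=
    exists_halfDisc_eq_two_mul_c_eq odd_one hm hodd (by simp [isCoprime_one_right])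
  exact F.represents_c.of_representedBy (hF.representedBy_formA₃ hdisc)

theorem formA₃_represents_two_mul {m : ℤ} (hm : 0 < m) (hodd : Odd m) (h8 : m % 8 ≠ 7) :
    formA₃.Represents (2 * m) := by
  obtain ⟨F, hF, hdisc, hc, -⟩ := exists_halfDisc_eq_two_mul_c_eq_two_mul odd_one hm hodd
    (by simp [isCoprime_one_right]) (by push_cast; omega)
  rw [← hc]
  exact F.represents_c.of_representedBy (hF.representedBy_formA₃ hdisc)

theorem loeschianForm_two_represents_of_odd {m : ℤ} (hm : 0 < m) (hodd : Odd m) :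
    (loeschianForm 2).Represents m := by
  by_cases h3 : m % 3 = 0
  · obtain ⟨m, rfl⟩ := Int.dvd_of_emod_eq_zero h3
    exact loeschianForm_two_represents_three_mul
      (formA₃_represents_of_odd (by omega) (Int.odd_mul.1 hodd).2)
  · obtain ⟨F, hF, hdisc, rfl, hminor⟩ := exists_halfDisc_eq_two_mul_c_eq (g := 3)
      (by decide) hm hodd (isCoprime_three_right h3)
    exact F.represents_c.of_representedBy (hF.representedBy_loeschianForm_two hdisc (by omega))

theorem loeschianForm_two_represents_two_mul {m : ℤ} (hm : 0 < m) (hodd : Odd m)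
    (h8 : m % 8 ≠ 5) : (loeschianForm 2).Represents (2 * m) := by
  by_cases h3 : m % 3 = 0
  · obtain ⟨m, rfl⟩ := Int.dvd_of_emod_eq_zero h3
    rw [mul_left_comm]
    exact loeschianForm_two_represents_three_mul
      (formA₃_represents_two_mul (by omega) (Int.odd_mul.1 hodd).2 (by omega))
  · obtain ⟨F, hF, hdisc, hc, hminor⟩ := exists_halfDisc_eq_two_mul_c_eq_two_mul (g := 3)
      (by decide) hm hodd (isCoprime_three_right h3) (by push_cast; omega)
    rw [← hc]
    exact F.represents_c.of_representedBy (hF.representedBy_loeschianForm_two hdisc (by omega))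

theorem loeschianForm_two_represents {m : ℤ} (hm : 0 < m) (h4 : m % 4 ≠ 0) (h16 : m % 16 ≠ 10) :
    (loeschianForm 2).Represents m := by
  rcases Int.even_or_odd' m with ⟨m, rfl | rfl⟩
  · exact loeschianForm_two_represents_two_mul (by omega) (Int.odd_iff.2 (by omega)) (by omega)
  · exact loeschianForm_two_represents_of_odd hm (odd_two_mul_add_one m)

end TernaryForm

/-! ### The quaternary forms -/

/-- `n` is represented by the quaternary form `a x² + b y² + (z² + zw + w²)`. -/
def QuaternaryRepresents (a b n : ℕ) : Prop :=
  ∃ x y z w : ℤ, (n : ℤ) = a * x ^ 2 + b * y ^ 2 + (z ^ 2 + z * w + w ^ 2)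

open TernaryForm

namespace QuaternaryRepresents

variable {a b n : ℕ}

theorem of_sub (y : ℤ) (h : (loeschianForm a).Represents (n - b * y ^ 2)) :
    QuaternaryRepresents a b n := by
  obtain ⟨x, z, w, h⟩ := loeschianForm_represents_iff.1 h
  exact ⟨x, y, z, w, by linear_combination h⟩

protected theorem zero : QuaternaryRepresents a b 0 :=
  ⟨0, 0, 0, 0, by simp⟩

theorem four_mul (h : QuaternaryRepresents a b n) : QuaternaryRepresents a b (4 * n) := by
  obtain ⟨x, y, z, w, h⟩ := h
  exact ⟨2 * x, 2 * y, 2 * z, 2 * w, by push_cast; linear_combination 4 * h⟩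

theorem three_mul {c : ℕ} (h : QuaternaryRepresents a (3 * c) n) :
    QuaternaryRepresents c (3 * a) (3 * n) := by
  obtain ⟨x, y, z, w, h⟩ := h
  -- `3 (z² + zw + w²) = (z - w)² + (z - w) (z + 2w) + (z + 2w)²`
  exact ⟨3 * y, x, z - w, z + 2 * w, by push_cast at h ⊢; linear_combination 3 * h⟩

theorem one_left_of_emod_three (y : ℤ) (hpos : 0 < (n - b * y ^ 2 : ℤ))
    (h3 : (n - b * y ^ 2 : ℤ) % 3 ≠ 0) : QuaternaryRepresents 1 b n :=
  of_sub y (loeschianForm_one_represents hpos h3)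

theorem one_left_of_not_three_dvd (hb : ¬ 3 ∣ b) (hb5 : b ≤ 5) (n : ℕ) :
    QuaternaryRepresents 1 b n := by
  rcases eq_or_ne n 0 with rfl | h0
  · exact .zero
  by_cases hn : n % 3 = 0
  · rcases eq_or_ne n 3 with rfl | h3
    · exact ⟨0, 0, 1, 1, by norm_num⟩
    · exact one_left_of_emod_three 1 (by omega) (by omega)
  · exact one_left_of_emod_three 0 (by omega) (by omega)

theorem one_three (n : ℕ) : QuaternaryRepresents 1 3 n := by
  induction n using Nat.strong_induction_on with
  | _ n ih =>
  rcases eq_or_ne n 0 with rfl | h0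
  · exact .zero
  by_cases hn : n % 3 = 0
  · obtain ⟨n, rfl⟩ := Nat.dvd_of_mod_eq_zero hn
    exact three_mul (c := 1) (ih n (by omega))
  · exact one_left_of_emod_three 0 (by omega) (by omega)

theorem two_left_of_emod (y : ℤ) (hpos : 0 < (n - b * y ^ 2 : ℤ))
    (h4 : (n - b * y ^ 2 : ℤ) % 4 ≠ 0) (h16 : (n - b * y ^ 2 : ℤ) % 16 ≠ 10) :
    QuaternaryRepresents 2 b n :=
  of_sub y (loeschianForm_two_represents hpos h4 h16)

theorem two_left_of_emod_sixteen (hb2 : 2 ≤ b) (hb10 : b ≤ 10) (hn : n % 16 = 10) :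
    QuaternaryRepresents 2 b n := by
  by_cases hb : b % 4 = 2
  · by_cases hlt : 4 * b < n
    · exact two_left_of_emod 2 (by omega) (by omega) (by omega)
    obtain ⟨rfl, rfl⟩ | ⟨rfl, rfl⟩ | ⟨rfl, rfl⟩ :
        b = 6 ∧ n = 10 ∨ b = 10 ∧ n = 10 ∨ b = 10 ∧ n = 26 := by omega
    · exact ⟨0, 1, 2, 0, by norm_num⟩
    · exact ⟨0, 1, 0, 0, by norm_num⟩
    · exact ⟨0, 1, 4, 0, by norm_num⟩
  · exact two_left_of_emod 1 (by omega) (by omega) (by omega)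

theorem two_left (hb2 : 2 ≤ b) (hb10 : b ≤ 10) (n : ℕ) : QuaternaryRepresents 2 b n := by
  induction n using Nat.strong_induction_on with
  | _ n ih =>
  rcases eq_or_ne n 0 with rfl | h0
  · exact .zero
  by_cases h4 : n % 4 = 0
  · obtain ⟨n, rfl⟩ := Nat.dvd_of_mod_eq_zero h4
    exact (ih n (by omega)).four_mul
  by_cases h16 : n % 16 = 10
  · exact two_left_of_emod_sixteen hb2 hb10 h16
  · exact two_left_of_emod 0 (by omega) (by omega) (by omega)

theorem one_six (n : ℕ) : QuaternaryRepresents 1 6 n := by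
  by_cases hn : n % 3 = 0
  · obtain ⟨n, rfl⟩ := Nat.dvd_of_mod_eq_zero hn
    exact three_mul (c := 1) (two_left (by norm_num) (by norm_num) n)
  · exact one_left_of_emod_three 0 (by omega) (by omega)

theorem one_left (hb : 0 < b) (hb6 : b ≤ 6) (n : ℕ) : QuaternaryRepresents 1 b n := by
  by_cases h3 : 3 ∣ b
  · obtain rfl | rfl : b = 3 ∨ b = 6 := by omega
    · exact one_three n
    · exact one_six n
  · exact one_left_of_not_three_dvd h3 (by omega) n

end QuaternaryRepresents

theorem loeschian_nonneg (z w : ℤ) : 0 ≤ z ^ 2 + z * w + w ^ 2 := by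
  nlinarith [sq_nonneg (2 * z + w), sq_nonneg w]

theorem loeschian_emod_three_ne_two (z w : ℤ) : (z ^ 2 + z * w + w ^ 2) % 3 ≠ 2 := by
  intro h
  have hmod : (z ^ 2 + z * w + w ^ 2 : ZMod 3) = 2 := by
    exact_mod_cast (ZMod.intCast_eq_intCast_iff' _ 2 3).2 h
  exact (by decide : ∀ z w : ZMod 3, z ^ 2 + z * w + w ^ 2 ≠ 2) _ _ hmod

theorem loeschian_emod_four_ne_two (z w : ℤ) : (z ^ 2 + z * w + w ^ 2) % 4 ≠ 2 := by
  intro h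
  have hmod : (z ^ 2 + z * w + w ^ 2 : ZMod 4) = 2 := by
    exact_mod_cast (ZMod.intCast_eq_intCast_iff' _ 2 4).2 h
  exact (by decide : ∀ z w : ZMod 4, z ^ 2 + z * w + w ^ 2 ≠ 2) _ _ hmod

theorem eq_zero_of_mul_sq_lt {b y : ℤ} (hb : 0 ≤ b) (h : b * y ^ 2 < b) : y = 0 := by
  by_contra hy
  have : 0 < y ^ 2 := by positivity
  nlinarith

theorem not_loeschianForm_represents_two {a : ℤ} (ha : 2 < a) :
    ¬ (loeschianForm a).Represents 2 := by
  rw [loeschianForm_represents_iff]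
  rintro ⟨x, z, w, h⟩
  have hnonneg := loeschian_nonneg z w
  obtain rfl : x = 0 := eq_zero_of_mul_sq_lt (b := a) (by omega) (by linarith)
  have := loeschian_emod_three_ne_two z w
  omega

theorem not_loeschianForm_one_represents_six : ¬ (loeschianForm 1).Represents 6 := by
  rw [loeschianForm_represents_iff]
  rintro ⟨x, z, w, h⟩
  have hnonneg := loeschian_nonneg z w
  have h3 := loeschian_emod_three_ne_two z w
  have h4 := loeschian_emod_four_ne_two z w
  obtain ⟨hx1, hx2⟩ : -2 ≤ x ∧ x ≤ 2 := by constructor <;> nlinarith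
  interval_cases x <;> omega

theorem not_loeschianForm_two_represents_ten : ¬ (loeschianForm 2).Represents 10 := by
  rw [loeschianForm_represents_iff]
  rintro ⟨x, z, w, h⟩
  have hnonneg := loeschian_nonneg z w
  have h3 := loeschian_emod_three_ne_two z w
  have h4 := loeschian_emod_four_ne_two z w
  obtain ⟨hx1, hx2⟩ : -2 ≤ x ∧ x ≤ 2 := by constructor <;> nlinarith
  interval_cases x <;> omega

theorem QuaternaryRepresents.loeschianForm_of_lt {a b n : ℕ} (h : QuaternaryRepresents a b n)
    (hn : n < b) : (loeschianForm a).Represents n := by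
  obtain ⟨x, y, z, w, h⟩ := h
  have hx : (0 : ℤ) ≤ a * x ^ 2 := by positivity
  have hnonneg := loeschian_nonneg z w
  obtain rfl : y = 0 := eq_zero_of_mul_sq_lt (b := b) (by omega) (by linarith)
  exact loeschianForm_represents_iff.2 ⟨x, z, w, by linear_combination h⟩

theorem stmt_7 (a b : ℕ) (ha : 0 < a) (hb : 0 < b) (hab : a ≤ b)
    (h : ∀ n ∈ ({1, 2, 6, 10} : Set ℕ), ∃ x y z w : ℤ,
      (n : ℤ) = a * x ^ 2 + b * y ^ 2 + (z ^ 2 + z * w + w ^ 2)) :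
    ∀ n : ℕ, ∃ x y z w : ℤ,
      (n : ℤ) = a * x ^ 2 + b * y ^ 2 + (z ^ 2 + z * w + w ^ 2) := by
  change ∀ n, QuaternaryRepresents a b n
  have two : QuaternaryRepresents a b 2 := h 2 (by simp)
  have six : QuaternaryRepresents a b 6 := h 6 (by simp)
  have ten : QuaternaryRepresents a b 10 := h 10 (by simp)
  have ha2 : a ≤ 2 := by
    by_contra! hlt
    exact not_loeschianForm_represents_two (by omega) (two.loeschianForm_of_lt (by omega))
  obtain rfl | rfl : a = 1 ∨ a = 2 := by omega
  · have hb6 : b ≤ 6 := by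
      by_contra! hlt
      exact not_loeschianForm_one_represents_six (six.loeschianForm_of_lt hlt)
    exact QuaternaryRepresents.one_left hb hb6
  · have hb10 : b ≤ 10 := by
      by_contra! hlt
      exact not_loeschianForm_two_represents_ten (ten.loeschianForm_of_lt hlt)
    exact QuaternaryRepresents.two_left hab hb10
end

section
/- There exist no positive integers a, c such that the ternary form f^a_c(x,y,z) = a·x² + c·(y² + y·z + z²) represents every natural number; that is, for all positive integers a and c there is some positive integer n which cannot be written as a·x² + c·(y² + y·z + z²) with x, y, z ∈ ℤ. -/
/-!
A form representing `1` and `2` has `(a, c) ∈ {(1, 1), (1, 2), (2, 1)}`, because neither `x ^ 2` nor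
`y ^ 2 + y * z + z ^ 2` takes the value `2`. Each of these three forms is anisotropic over `ℚ_p` for
`p = 3` or `p = 2`, and divisibility by `p` shows that they miss entire residue classes, `6` modulo
`9`, `5` modulo `8` and `10` modulo `16` respectively.
-/

theorem left_eq_of_mul_eq_prime {p a k : ℕ} (hp : p.Prime) (h : a * k = p) (hk : k ≠ p) :
    a = p := by
  subst h
  rcases Nat.prime_mul_iff.1 hp with ⟨-, rfl⟩ | ⟨-, rfl⟩ <;> lia

theorem dvd_and_dvd_of_dvd_sq_add_sq {p : ℕ} [Fact p.Prime] (hp : p % 4 = 3) {x y : ℤ}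
    (h : (p : ℤ) ∣ x ^ 2 + y ^ 2) : (p : ℤ) ∣ x ∧ (p : ℤ) ∣ y := by
  simp only [← ZMod.intCast_zmod_eq_zero_iff_dvd] at h ⊢
  push_cast at h
  constructor
  · by_contra hx
    exact ZMod.mod_four_ne_three_of_sq_eq_neg_sq hx (eq_neg_of_add_eq_zero_left h) hp
  · by_contra hy
    exact ZMod.mod_four_ne_three_of_sq_eq_neg_sq' hy (eq_neg_of_add_eq_zero_left h) hp

/-- The binary form `y ^ 2 + y * z + z ^ 2`, the norm of the Eisenstein integer `y - z * ω`. -/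
def eisensteinNorm (y z : ℤ) : ℤ :=
  y ^ 2 + y * z + z ^ 2

theorem eisensteinNorm_nonneg (y z : ℤ) : 0 ≤ eisensteinNorm y z := by
  unfold eisensteinNorm
  nlinarith only [sq_nonneg (y + z), sq_nonneg y, sq_nonneg z]

theorem eisensteinNorm_mul_mul (k y z : ℤ) :
    eisensteinNorm (k * y) (k * z) = k ^ 2 * eisensteinNorm y z := by
  unfold eisensteinNorm
  ring

theorem even_eisensteinNorm_iff {y z : ℤ} : Even (eisensteinNorm y z) ↔ Even y ∧ Even z := by
  simp only [eisensteinNorm, Int.even_add, Int.even_mul, Int.even_pow' two_ne_zero]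
  tauto

theorem exists_eisensteinNorm_eq_four_mul {y z : ℤ} (h : Even (eisensteinNorm y z)) :
    ∃ v w, eisensteinNorm y z = 4 * eisensteinNorm v w := by
  obtain ⟨hy, hz⟩ := even_eisensteinNorm_iff.1 h
  obtain ⟨v, rfl⟩ := hy.two_dvd
  obtain ⟨w, rfl⟩ := hz.two_dvd
  exact ⟨v, w, eisensteinNorm_mul_mul 2 v w⟩

theorem eisensteinNorm_emod_four_ne_two (y z : ℤ) : eisensteinNorm y z % 4 ≠ 2 := by
  intro h
  have norm_even : Even (eisensteinNorm y z) := by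
    rw [Int.even_iff]
    lia
  obtain ⟨v, w, hvw⟩ := exists_eisensteinNorm_eq_four_mul norm_even
  lia

section ResidueClasses

variable (x y z : ℤ)

theorem sq_add_eisensteinNorm_emod_nine_ne_six : (x ^ 2 + eisensteinNorm y z) % 9 ≠ 6 := by
  intro h
  have norm_eq : eisensteinNorm y z = (y - z) ^ 2 + 3 * (y * z) := by
    unfold eisensteinNorm
    ring
  have three_dvd : ((3 : ℕ) : ℤ) ∣ x ^ 2 + (y - z) ^ 2 := by lia
  obtain ⟨⟨k, hk⟩, ⟨m, hm⟩⟩ := dvd_and_dvd_of_dvd_sq_add_sq rfl three_dvd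
  have value_eq : x ^ 2 + eisensteinNorm y z = 9 * (k ^ 2 + m ^ 2 + m * z) + 3 * z ^ 2 := by
    obtain rfl : y = z + 3 * m := by lia
    rw [hk, eisensteinNorm]
    ring
  have three_dvd_sq_add_one : ((3 : ℕ) : ℤ) ∣ z ^ 2 + 1 ^ 2 := by lia
  have three_dvd_one := (dvd_and_dvd_of_dvd_sq_add_sq rfl three_dvd_sq_add_one).2
  lia

theorem sq_add_two_mul_eisensteinNorm_emod_eight_ne_five :
    (x ^ 2 + 2 * eisensteinNorm y z) % 8 ≠ 5 := by
  intro h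
  have x_odd : Odd x := by
    rw [← Int.odd_pow' two_ne_zero, Int.odd_iff]
    lia
  have x_sq := Int.eight_dvd_sq_sub_one_of_odd x_odd
  exact eisensteinNorm_emod_four_ne_two y z (by lia)

theorem two_mul_sq_add_eisensteinNorm_emod_sixteen_ne_ten :
    (2 * x ^ 2 + eisensteinNorm y z) % 16 ≠ 10 := by
  intro h
  have norm_even : Even (eisensteinNorm y z) := by
    rw [Int.even_iff]
    lia
  obtain ⟨v, w, hvw⟩ := exists_eisensteinNorm_eq_four_mul norm_even
  exact sq_add_two_mul_eisensteinNorm_emod_eight_ne_five x v w (by lia)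

end ResidueClasses

/-- The natural number `n` is a value of the ternary form `f^a_c`. -/
def TernaryRepresents (a c n : ℕ) : Prop :=
  ∃ x y z : ℤ, (n : ℤ) = a * x ^ 2 + c * eisensteinNorm y z

namespace TernaryRepresents

variable {a c n : ℕ}

theorem exists_mul_add_mul_eq (h : TernaryRepresents a c n) :
    ∃ s t : ℕ, s ≠ 2 ∧ t ≠ 2 ∧ a * s + c * t = n := by
  obtain ⟨x, y, z, hxyz⟩ := h
  have x_sq := Int.sq_ne_two_mod_four x
  have norm_ne := eisensteinNorm_emod_four_ne_two y z
  rw [← sq] at x_sq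
  lift eisensteinNorm y z to ℕ using eisensteinNorm_nonneg y z with t
  lift x ^ 2 to ℕ using sq_nonneg x with s
  exact ⟨s, t, by lia, by lia, by exact_mod_cast hxyz.symm⟩

theorem eq_one_or_eq_one (h : TernaryRepresents a c 1) : a = 1 ∨ c = 1 := by
  obtain ⟨s, t, -, -, hst⟩ := h.exists_mul_add_mul_eq
  rcases Nat.add_eq_one_iff.1 hst with ⟨-, ht⟩ | ⟨hs, -⟩
  · exact .inr (Nat.eq_one_of_mul_eq_one_right ht)
  · exact .inl (Nat.eq_one_of_mul_eq_one_right hs)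

theorem eq_two_or_eq_two_or_eq_one_and_eq_one (h : TernaryRepresents a c 2) :
    a = 2 ∨ c = 2 ∨ a = 1 ∧ c = 1 := by
  obtain ⟨s, t, hs, ht, hst⟩ := h.exists_mul_add_mul_eq
  rcases Nat.add_eq_two_iff.1 hst with ⟨-, hct⟩ | ⟨has, hct⟩ | ⟨has, -⟩
  · exact .inr (.inl (left_eq_of_mul_eq_prime Nat.prime_two hct ht))
  · exact .inr (.inr ⟨Nat.eq_one_of_mul_eq_one_right has, Nat.eq_one_of_mul_eq_one_right hct⟩)
  · exact .inl (left_eq_of_mul_eq_prime Nat.prime_two has hs)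

end TernaryRepresents

theorem stmt_8 (a c : ℕ) (ha : 0 < a) (hc : 0 < c) :
    ∃ n : ℕ, 0 < n ∧ ¬ ∃ x y z : ℤ,
      (n : ℤ) = a * x ^ 2 + c * (y ^ 2 + y * z + z ^ 2) := by
  change ∃ n, 0 < n ∧ ¬TernaryRepresents a c n
  by_contra! represents
  have one_coeff := (represents 1 one_pos).eq_one_or_eq_one
  have two_coeff := (represents 2 two_pos).eq_two_or_eq_two_or_eq_one_and_eq_one
  obtain ⟨rfl, rfl⟩ | ⟨rfl, rfl⟩ | ⟨rfl, rfl⟩ :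
      a = 1 ∧ c = 1 ∨ a = 1 ∧ c = 2 ∨ a = 2 ∧ c = 1 := by lia
  · obtain ⟨x, y, z, h⟩ := represents 6 (by simp)
    exact sq_add_eisensteinNorm_emod_nine_ne_six x y z (by lia)
  · obtain ⟨x, y, z, h⟩ := represents 5 (by simp)
    exact sq_add_two_mul_eisensteinNorm_emod_eight_ne_five x y z (by lia)
  · obtain ⟨x, y, z, h⟩ := represents 10 (by simp)
    exact two_mul_sq_add_eisensteinNorm_emod_sixteen_ne_ten x y z (by lia)
end
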